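/- arXiv:2601.07740 — 3 statements merged into one kernel-verified Lean document; each statement's English description precedes it below -/
import Mathlib

section
/- Let H be a bipartite graph on parts A and B with |A| = |B| = n, and suppose every vertex of A has degree at most D in H. Then the number of perfect matchings of H is at most (D!)^{n/D}. -/
/-!
The argument is Schrijver's, run on an arbitrary finite set `S` of bijections instead of the
perfect matchings of a graph. Let `R a` be the set of values `f a` for `f ∈ S`. For each vertex `a`
the fibres of `f ↦ f a` partition `S` into `#(R a)` pieces, so convexity bounds `#S * log #S` by
the sum over `v ∈ S` of `log #(R a)` plus the logarithm of the size of the fibre of `v`. On that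
fibre `a` is already matched, to `v a`, so by induction its size is controlled by the sets
`R j \ {v a}` with `j ≠ a`. Now sum over all `a`: for fixed `v` and `j`, exactly `#(R j) - 1` of the
vertices `a ≠ j` have `v a ∈ R j`, so with `g r = log (r!) / r` the terms of `j` add up to a
multiple of `g #(R j)` because `log r + (r - 1) * g (r - 1) = r * g r`.

The induction runs over a finite set `U` of vertices outside which all members of `S` agree: fixing
the value at `a ∈ U` replaces `U` by `U \ {a}`, and the vertex sets of the graph never change.
-/

section BregmanMinc

open Finset
open Real (log exp)
open scoped Nat

/-- The logarithm of `(r!) ^ (1 / r)`, the quantity that a vertex of degree `r` contributes to the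
Brégman–Minc bound. It is `0` at `r = 0`. -/
noncomputable def logFactorialRoot (r : ℕ) : ℝ := log r ! / r

lemma logFactorialRoot_nonneg (r : ℕ) : 0 ≤ logFactorialRoot r :=
  div_nonneg (Real.log_natCast_nonneg _) r.cast_nonneg

lemma natCast_mul_logFactorialRoot (r : ℕ) : r * logFactorialRoot r = log r ! := by
  rcases eq_or_ne r 0 with rfl | hr
  · simp
  · exact mul_div_cancel₀ _ (Nat.cast_ne_zero.2 hr)

lemma log_factorial_succ (r : ℕ) : log (r + 1)! = log (r + 1 : ℕ) + log r ! := by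
  rw [Nat.factorial_succ, Nat.cast_mul, Real.log_mul (by positivity) (by positivity)]

lemma exp_logFactorialRoot (r : ℕ) : exp (logFactorialRoot r) = (r ! : ℝ) ^ (1 / r : ℝ) := by
  rw [Real.rpow_def_of_pos (by positivity), logFactorialRoot, mul_one_div]

lemma logFactorialRoot_mono : Monotone logFactorialRoot := by
  refine monotone_nat_of_le_succ fun r ↦ ?_
  have log_factorial_le : log r ! ≤ r * log (r + 1 : ℕ) := by
    rw [← Real.log_pow]
    refine Real.log_le_log (by positivity) ?_
    exact_mod_cast r.factorial_le_pow.trans (Nat.pow_le_pow_left r.le_succ r)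
  rcases r.eq_zero_or_pos with rfl | hr
  · simp [logFactorialRoot]
  · rw [logFactorialRoot, logFactorialRoot, div_le_div_iff₀ (by positivity) (by positivity),
      log_factorial_succ]
    push_cast at log_factorial_le ⊢
    linarith

lemma factorial_rpow_one_div_mono : Monotone fun r : ℕ ↦ (r ! : ℝ) ^ (1 / r : ℝ) := by
  simp only [← exp_logFactorialRoot]
  exact Real.exp_monotone.comp logFactorialRoot_mono

lemma sum_inv_card_fiber {ι κ : Type*} [DecidableEq κ] (s : Finset ι) (f : ι → κ) :
    ∑ i ∈ s, (#{k ∈ s | f k = f i} : ℝ)⁻¹ = #(s.image f) := by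
  have sum_fiber : ∀ x ∈ s.image f, ∑ i ∈ s with f i = x, (#{k ∈ s | f k = f i} : ℝ)⁻¹ = 1 := by
    intro x hx
    obtain ⟨i, hi, rfl⟩ := mem_image.1 hx
    have fiber_nonempty : {k ∈ s | f k = f i}.Nonempty := ⟨i, by simp [hi]⟩
    rw [sum_congr rfl fun k hk ↦ by rw [(mem_filter.1 hk).2], sum_const, nsmul_eq_mul,
      mul_inv_cancel₀ (by exact_mod_cast fiber_nonempty.card_ne_zero)]
  rw [← sum_fiberwise_of_maps_to fun _ ↦ mem_image_of_mem f, sum_congr rfl sum_fiber]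
  simp

/-- The tangent-line form of Jensen's inequality: `log x ≤ x - 1` at
`x = #s / (#(s.image f) * #fibre)` sums to `0` on the right. -/
lemma card_mul_log_card_le {ι κ : Type*} [DecidableEq κ] (s : Finset ι) (f : ι → κ) :
    #s * log #s ≤ ∑ i ∈ s, (log #(s.image f) + log #{k ∈ s | f k = f i}) := by
  have tangent : ∀ i ∈ s, log #s - (log #(s.image f) + log #{k ∈ s | f k = f i}) ≤
      #s / #(s.image f) * (#{k ∈ s | f k = f i} : ℝ)⁻¹ - 1 := by
    intro i hi
    have hs : (0 : ℝ) < #s := by exact_mod_cast card_pos.2 ⟨i, hi⟩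
    have himage : (0 : ℝ) < #(s.image f) := by
      exact_mod_cast card_pos.2 ⟨f i, mem_image_of_mem f hi⟩
    have hfiber : (0 : ℝ) < #{k ∈ s | f k = f i} := by
      exact_mod_cast card_pos.2 ⟨i, by simp [hi]⟩
    rw [← sub_sub, ← Real.log_div hs.ne' himage.ne', ← Real.log_div (by positivity) hfiber.ne']
    exact Real.log_le_sub_one_of_pos (by positivity)
  have tangent_sum : ∑ i ∈ s, (#s / #(s.image f) * (#{k ∈ s | f k = f i} : ℝ)⁻¹ - 1) = 0 := by
    rw [sum_sub_distrib, ← mul_sum, sum_inv_card_fiber]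
    rcases s.eq_empty_or_nonempty with rfl | hs
    · simp
    · rw [div_mul_cancel₀ _ (by exact_mod_cast (hs.image f).card_ne_zero)]
      simp
  have := sum_le_sum tangent
  rw [tangent_sum, sum_sub_distrib, sum_const, nsmul_eq_mul] at this
  linarith

lemma log_card_add_sum_logFactorialRoot_card_erase {β : Type*} [DecidableEq β] {V R : Finset β}
    (hRV : R ⊆ V) {b₀ : β} (hb₀ : b₀ ∈ R) :
    log #R + ∑ b ∈ V.erase b₀, logFactorialRoot #(R.erase b) = #V * logFactorialRoot #R := by
  obtain ⟨r, hr⟩ : ∃ r, #R = r + 1 := Nat.exists_eq_succ_of_ne_zero (card_ne_zero_of_mem hb₀)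
  have card_erase {b : β} (hb : b ∈ R) : #(R.erase b) = r := by
    rw [card_erase_of_mem hb, hr, Nat.add_sub_cancel]
  have sum_inside : ∑ b ∈ R, logFactorialRoot #(R.erase b) = (r + 1) * logFactorialRoot r := by
    rw [sum_congr rfl fun b hb ↦ by rw [card_erase hb]]
    simp [hr]
  have sum_outside : ∑ b ∈ V \ R, logFactorialRoot #(R.erase b) =
      (#V - (r + 1)) * logFactorialRoot (r + 1) := by
    rw [sum_congr rfl fun b hb ↦ by rw [erase_eq_of_notMem (mem_sdiff.1 hb).2, hr], sum_const,
      nsmul_eq_mul, cast_card_sdiff hRV, hr, Nat.cast_succ]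
  have sum_all := sum_sdiff (f := fun b ↦ logFactorialRoot #(R.erase b)) hRV
  have sum_erase := sum_erase_add V (fun b ↦ logFactorialRoot #(R.erase b)) (hRV hb₀)
  have recursion := log_factorial_succ r
  rw [← natCast_mul_logFactorialRoot, ← natCast_mul_logFactorialRoot] at recursion
  rw [card_erase hb₀] at sum_erase
  rw [hr]
  push_cast at recursion ⊢
  linarith

section valuesAt

variable {A B : Type*} [DecidableEq B]

/-- The set of values at `a` of the bijections in `S`; for the perfect matchings of a graph, the
neighbours of `a` along edges that extend to a perfect matching. -/
def valuesAt (S : Finset (A ≃ B)) (a : A) : Finset B := S.image fun f ↦ f a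

lemma apply_mem_valuesAt {S : Finset (A ≃ B)} {f : A ≃ B} (hf : f ∈ S) (a : A) :
    f a ∈ valuesAt S a :=
  mem_image_of_mem (fun g : A ≃ B ↦ g a) hf

lemma valuesAt_fiber_subset_erase (S : Finset (A ≃ B)) {a j : A} (hja : j ≠ a) (b : B) :
    valuesAt {f ∈ S | f a = b} j ⊆ (valuesAt S j).erase b := by
  intro x hx
  obtain ⟨f, hf, rfl⟩ := mem_image.1 hx
  obtain ⟨hfS, rfl⟩ := mem_filter.1 hf
  exact mem_erase.2 ⟨f.injective.ne hja, apply_mem_valuesAt hfS j⟩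

lemma valuesAt_subset_map {S : Finset (A ≃ B)} {U : Finset A}
    (hSU : ∀ f ∈ S, ∀ g ∈ S, ∀ a ∉ U, f a = g a) {v : A ≃ B} (hv : v ∈ S) {j : A} (hj : j ∈ U) :
    valuesAt S j ⊆ U.map v.toEmbedding := by
  intro x hx
  obtain ⟨f, hf, rfl⟩ := mem_image.1 hx
  rw [mem_map_equiv]
  by_contra hU
  have apply_eq : f (v.symm (f j)) = f j := by simpa using hSU f hf v hv _ hU
  rw [f.injective apply_eq] at hU
  exact hU hj

lemma log_card_add_sum_erase_valuesAt [DecidableEq A] {S : Finset (A ≃ B)} {U : Finset A}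
    (hSU : ∀ f ∈ S, ∀ g ∈ S, ∀ a ∉ U, f a = g a) {v : A ≃ B} (hv : v ∈ S) {j : A} (hj : j ∈ U) :
    log #(valuesAt S j) + ∑ a ∈ U.erase j, logFactorialRoot #((valuesAt S j).erase (v a)) =
      #U * logFactorialRoot #(valuesAt S j) := by
  have := log_card_add_sum_logFactorialRoot_card_erase (valuesAt_subset_map hSU hv hj)
    (apply_mem_valuesAt hv j)
  rwa [← Equiv.coe_toEmbedding, ← map_erase, sum_map, card_map] at this

lemma card_mul_log_card_le_of_forall_fiber [DecidableEq A] {S : Finset (A ≃ B)} {U : Finset A}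
    (hSU : ∀ f ∈ S, ∀ g ∈ S, ∀ a ∉ U, f a = g a)
    (hfiber : ∀ a ∈ U, ∀ v ∈ S, log #{f ∈ S | f a = v a} ≤
      ∑ j ∈ U.erase a, logFactorialRoot #(valuesAt {f ∈ S | f a = v a} j)) :
    #S * #U * log #S ≤ #S * #U * ∑ j ∈ U, logFactorialRoot #(valuesAt S j) := by
  have log_card_fiber_le : ∀ a ∈ U, ∀ v ∈ S, log #{f ∈ S | f a = v a} ≤
      ∑ j ∈ U.erase a, logFactorialRoot #((valuesAt S j).erase (v a)) := fun a ha v hv ↦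
    (hfiber a ha v hv).trans <| sum_le_sum fun j hj ↦ logFactorialRoot_mono <| card_le_card <|
      valuesAt_fiber_subset_erase S (ne_of_mem_erase hj) (v a)
  calc #S * #U * log #S
      = ∑ _a ∈ U, #S * log #S := by rw [sum_const, nsmul_eq_mul]; ring
    _ ≤ ∑ a ∈ U, ∑ v ∈ S, (log #(valuesAt S a) + log #{f ∈ S | f a = v a}) :=
        sum_le_sum fun a _ ↦ card_mul_log_card_le S fun f ↦ f a
    _ ≤ ∑ a ∈ U, ∑ v ∈ S, (log #(valuesAt S a) +
          ∑ j ∈ U.erase a, logFactorialRoot #((valuesAt S j).erase (v a))) := by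
        gcongr with a ha v hv
        exact log_card_fiber_le a ha v hv
    _ = ∑ v ∈ S, ∑ j ∈ U, (log #(valuesAt S j) +
          ∑ a ∈ U.erase j, logFactorialRoot #((valuesAt S j).erase (v a))) := by
        rw [sum_comm]
        refine sum_congr rfl fun v _ ↦ ?_
        rw [sum_add_distrib, sum_add_distrib]
        congr 1
        exact sum_comm' fun a j ↦ by simp only [mem_erase]; tauto
    _ = ∑ _v ∈ S, ∑ j ∈ U, #U * logFactorialRoot #(valuesAt S j) :=
        sum_congr rfl fun v hv ↦ sum_congr rfl fun j hj ↦
          log_card_add_sum_erase_valuesAt hSU hv hj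
    _ = #S * #U * ∑ j ∈ U, logFactorialRoot #(valuesAt S j) := by
        rw [sum_const, nsmul_eq_mul, ← mul_sum, mul_assoc]

theorem log_card_le_sum_logFactorialRoot_valuesAt {S : Finset (A ≃ B)} {U : Finset A}
    (hSU : ∀ f ∈ S, ∀ g ∈ S, ∀ a ∉ U, f a = g a) :
    log #S ≤ ∑ a ∈ U, logFactorialRoot #(valuesAt S a) := by
  classical
  induction U using Finset.eraseInduction generalizing S with
  | _ U ih =>
  rcases S.eq_empty_or_nonempty with rfl | hS
  · simpa using sum_nonneg fun a _ ↦ logFactorialRoot_nonneg _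
  rcases U.eq_empty_or_nonempty with rfl | hU
  · have card_le_one : #S ≤ 1 :=
      Finset.card_le_one.2 fun f hf g hg ↦ Equiv.ext fun a ↦ hSU f hf g hg a (notMem_empty a)
    simp [card_le_one.antisymm hS.card_pos]
  have fiber_agree (a : A) (b : B) : ∀ f ∈ ({f ∈ S | f a = b} : Finset (A ≃ B)),
      ∀ g ∈ ({f ∈ S | f a = b} : Finset (A ≃ B)), ∀ j ∉ U.erase a, f j = g j := by
    intro f hf g hg j hj
    obtain ⟨hfS, hfa⟩ := mem_filter.1 hf
    obtain ⟨hgS, hga⟩ := mem_filter.1 hg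
    rcases eq_or_ne j a with rfl | hja
    · exact hfa.trans hga.symm
    · exact hSU f hfS g hgS j fun hjU ↦ hj (mem_erase.2 ⟨hja, hjU⟩)
  have hpos : (0 : ℝ) < #S * #U := by exact_mod_cast Nat.mul_pos hS.card_pos hU.card_pos
  exact le_of_mul_le_mul_left
    (card_mul_log_card_le_of_forall_fiber hSU fun a ha v _ ↦ ih a ha (fiber_agree a (v a))) hpos

end valuesAt

theorem bregman_minc {A B : Type*} [Fintype A] [Finite B] (E : A → B → Prop) :
    (Nat.card {f : A ≃ B // ∀ a, E a (f a)} : ℝ) ≤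
      ∏ a, ((Nat.card {b // E a b})! : ℝ) ^ (1 / Nat.card {b // E a b} : ℝ) := by
  classical
  have := Fintype.ofFinite B
  set S : Finset (A ≃ B) := {f | ∀ a, E a (f a)}
  have card_valuesAt_le (a : A) : #(valuesAt S a) ≤ Nat.card {b // E a b} := by
    rw [Nat.card_eq_fintype_card, Fintype.card_subtype]
    refine card_le_card fun b hb ↦ ?_
    obtain ⟨f, hf, rfl⟩ := mem_image.1 hb
    simpa using (mem_filter.1 hf).2 a
  rw [Nat.card_eq_fintype_card, Fintype.card_subtype]
  calc (#S : ℝ) ≤ exp (log #S) := Real.le_exp_log _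
    _ ≤ exp (∑ a, logFactorialRoot (Nat.card {b // E a b})) :=
        Real.exp_le_exp.2 <| (log_card_le_sum_logFactorialRoot_valuesAt (by simp)).trans <|
          sum_le_sum fun a _ ↦ logFactorialRoot_mono (card_valuesAt_le a)
    _ = ∏ a, ((Nat.card {b // E a b})! : ℝ) ^ (1 / Nat.card {b // E a b} : ℝ) := by
        simp only [Real.exp_sum, exp_logFactorialRoot]

end BregmanMinc

/-- Brégman–Minc consequence: a bipartite graph on parts of size `n` with all
degrees on side `A` at most `D` has at most `(D!)^(n/D)` perfect matchings. -/
theorem perfect_matchings_le {A B : Type*} [Fintype A] [Fintype B]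
    (E : A → B → Prop) (n D : ℕ)
    (hA : Fintype.card A = n) (hB : Fintype.card B = n)
    (hdeg : ∀ a, Nat.card {b : B // E a b} ≤ D) :
    (Nat.card {f : A ≃ B // ∀ a, E a (f a)} : ℝ) ≤
      (D.factorial : ℝ) ^ ((n : ℝ) / D) := by
  calc (Nat.card {f : A ≃ B // ∀ a, E a (f a)} : ℝ)
      ≤ ∏ a, ((Nat.card {b // E a b}).factorial : ℝ) ^ (1 / Nat.card {b // E a b} : ℝ) :=
        bregman_minc E
    _ ≤ ∏ _a : A, (D.factorial : ℝ) ^ (1 / D : ℝ) :=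
        Finset.prod_le_prod (fun _ _ ↦ by positivity) fun a _ ↦
          factorial_rpow_one_div_mono (hdeg a)
    _ = (D.factorial : ℝ) ^ ((n : ℝ) / D) := by
        rw [Finset.prod_const, Finset.card_univ, hA, ← Real.rpow_mul_natCast (by positivity),
          one_div_mul_eq_div]
end

section
/- There exists d₀ > 0 such that for all integers d ≥ d₀ the following holds. Let G be an n-vertex graph with all degrees in [(1-10^{-10})d, (1+10^{-10})d] and let T be any n-vertex tree. Then the number of injective embeddings of T into G is at most e^{-n/1000}·d^n. -/
/-!
Embed the vertices of `T` one at a time, parents before children, each into a uniformly random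
unused neighbour of the image of its parent. An embedding `φ` is produced with probability
`1 / (n ∏ aᵢ)`, where `aᵢ` is the number of unused neighbours available for the `i`-th vertex, and
these probabilities add up to at most one. As `1 / aᵢ ≥ exp (1 - aᵢ / D) / D`, it follows that
`∑ φ, exp (∑ i, (1 - aᵢ / D)) ≤ n D ^ (n - 1)`, so it suffices to bound `∑ i, (1 - aᵢ / D)` below by
a multiple of `n` for every `φ`, where `D` bounds the degrees of `G`.

If few vertices are leaves, pick one child of every other vertex `k`. The neighbours available for
this child are images of vertices embedded after `k`, so in the sum over `k` every edge of `G` is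
counted at most once and these `aᵢ` add up to at most `n D / 2`.

If many vertices are leaves, embed them last, in some order or in the reverse order. A neighbour of
the parent of a leaf `i` that is available for `i` in both orders is the image of `i` itself, so the
two values of `aᵢ` add up to at most `D + 1`. Hence one of the two orders is good for `φ`.
-/

open Finset Function SimpleGraph

section Sequential

variable {ι V α : Type*} [Fintype ι] [DecidableEq ι] [Fintype V]

lemma sum_sum_update {M : Type*} [AddCommMonoid M] (a : ι) (F : (ι → V) → M) :
    ∑ f, ∑ x, F (update f a x) = Fintype.card V • ∑ f, F f := by
  have swap_involutive :
      Involutive fun p : (ι → V) × V ↦ (update p.1 a p.2, p.1 a) := fun p ↦ by simp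
  calc ∑ f, ∑ x, F (update f a x)
      = ∑ p : (ι → V) × V, F (update p.1 a p.2) := by rw [Fintype.sum_prod_type]
    _ = ∑ p : (ι → V) × V, F p.1 :=
      Equiv.sum_comp swap_involutive.toPerm fun p ↦ F p.1
    _ = Fintype.card V • ∑ f, F f := by
      rw [Fintype.sum_prod_type]
      simp only [sum_const, card_univ, sum_nsmul]

variable [LinearOrder α] {r : ι → α} {K : ι → (ι → V) → V → ℝ}

-- The other factors do not depend on the value at the index of highest rank, so that value can be
-- summed over first.
lemma card_pow_mul_sum_prod_le (hK_nonneg : ∀ i f x, 0 ≤ K i f x)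
    (hK_sum : ∀ i f, ∑ x, K i f x ≤ 1)
    (hK_past : ∀ i f g, (∀ j, r j < r i → f j = g j) → K i f = K i g) (s : Finset ι) :
    (Fintype.card V : ℝ) ^ #s * ∑ f, ∏ i ∈ s, K i f (f i) ≤ Fintype.card V ^ Fintype.card ι := by
  induction s using induction_on_max_value r with
  | empty => simp
  | insert a s ha hmax ih =>
    have prod_update (f : ι → V) (x : V) :
        ∏ i ∈ insert a s, K i (update f a x) (update f a x i) =
          K a f x * ∏ i ∈ s, K i f (f i) := by
      have hK_update (i : ι) (hi : r i ≤ r a) : K i (update f a x) = K i f :=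
        hK_past _ _ _ fun j hj ↦ update_of_ne (by rintro rfl; exact hj.not_ge hi) _ _
      rw [prod_insert ha, hK_update a le_rfl, update_self]
      congr 1
      refine prod_congr rfl fun i hi ↦ ?_
      rw [hK_update i (hmax i hi), update_of_ne (ne_of_mem_of_not_mem hi ha)]
    refine le_trans ?_ ih
    rw [card_insert_of_notMem ha, pow_succ, mul_assoc, ← nsmul_eq_mul, ← sum_sum_update a]
    gcongr with f
    simp_rw [prod_update, ← sum_mul]
    exact mul_le_of_le_one_left (prod_nonneg fun i _ ↦ hK_nonneg _ _ _) (hK_sum a f)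

lemma sum_prod_le_one (hK_nonneg : ∀ i f x, 0 ≤ K i f x)
    (hK_sum : ∀ i f, ∑ x, K i f x ≤ 1)
    (hK_past : ∀ i f g, (∀ j, r j < r i → f j = g j) → K i f = K i g) :
    ∑ f, ∏ i, K i f (f i) ≤ 1 := by
  cases isEmpty_or_nonempty V
  · cases isEmpty_or_nonempty ι <;> simp
  · have hcard : (0 : ℝ) < Fintype.card V ^ Fintype.card ι := by positivity
    have hle := card_pow_mul_sum_prod_le hK_nonneg hK_sum hK_past univ
    rwa [card_univ, mul_le_iff_le_one_right hcard] at hle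

lemma sum_prod_inv_card_le_one [DecidableEq V] {c : ι → (ι → V) → Finset V}
    (hc : ∀ i f g, (∀ j, r j < r i → f j = g j) → c i f = c i g) :
    ∑ f with ∀ i, f i ∈ c i f, ∏ i, (#(c i f) : ℝ)⁻¹ ≤ 1 := by
  have hle := sum_prod_le_one (r := r) (K := fun i f x ↦ if x ∈ c i f then (#(c i f) : ℝ)⁻¹ else 0)
    (fun i f x ↦ by positivity) (fun i f ↦ by simpa using mul_inv_le_one)
    (fun i f g h ↦ by simp only [hc i f g h])
  simpa only [prod_ite_zero, mem_univ, forall_const, ← sum_filter] using hle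

end Sequential

/-- `par` is the parent map of a spanning tree of `T` with root `ρ`, and the rank `r` increases from
parent to child. Ranks need not be distinct, and `par ρ` is irrelevant. -/
structure IsRankedTree {W α : Type*} [LT α] (T : SimpleGraph W) (r : W → α) (ρ : W)
    (par : W → W) : Prop where
  adj : ∀ i ≠ ρ, T.Adj (par i) i
  lt : ∀ i ≠ ρ, r (par i) < r i

lemma exists_isRankedTree_dist {W : Type*} {T : SimpleGraph W} (hT : T.Connected) (ρ : W) :
    ∃ par, IsRankedTree T (T.dist ρ) ρ par := by
  have exists_parent (i : W) (hi : i ≠ ρ) : ∃ j, T.Adj j i ∧ T.dist ρ j < T.dist ρ i := by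
    obtain ⟨w, hw⟩ := hT.exists_walk_length_eq_dist i ρ
    cases w with
    | nil => exact absurd rfl hi
    | cons hadj w =>
      refine ⟨_, hadj.symm, ?_⟩
      rw [dist_comm, dist_comm (u := ρ), ← hw, Walk.length_cons, Nat.lt_succ_iff]
      exact dist_le w
  choose! par hadj hlt using exists_parent
  exact ⟨par, hadj, hlt⟩

section Saving

variable {V W α : Type*} [DecidableEq V] [Fintype W] [LinearOrder α]

/-- The vertices available for the image of `i` when `f` is built greedily in order of rank: the
neighbours of the image of the parent of `i` that are not the image of a vertex of lower rank. -/
def freeNeighbors (G : SimpleGraph V) [G.LocallyFinite] (r : W → α) (par : W → W) (f : W → V)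
    (i : W) : Finset V :=
  G.neighborFinset (f (par i)) \ ({j | r j < r i} : Finset W).image f

/-- The exponent by which the greedy construction of `f` beats the trivial bound of `D` choices for
every vertex other than the root. -/
noncomputable def greedySaving [DecidableEq W] (G : SimpleGraph V) [G.LocallyFinite] (r : W → α)
    (ρ : W) (par : W → W) (D : ℝ) (f : W → V) : ℝ :=
  ∑ i ∈ univ.erase ρ, (1 - #(freeNeighbors G r par f i) / D)

variable {G : SimpleGraph V} [G.LocallyFinite] {T : SimpleGraph W} {r : W → α} {ρ : W}
  {par : W → W}

lemma apply_mem_freeNeighbors (h : IsRankedTree T r ρ par) (φ : Copy T G) {i : W} (hi : i ≠ ρ) :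
    φ i ∈ freeNeighbors G r par φ i := by
  simp only [freeNeighbors, mem_sdiff, mem_neighborFinset, mem_image, mem_filter_univ, not_exists,
    not_and]
  refine ⟨φ.toHom.map_adj (h.adj i hi), fun j hj heq ↦ ?_⟩
  rw [φ.injective heq] at hj
  exact lt_irrefl _ hj

lemma freeNeighbors_congr {i : W} (hi : r (par i) < r i) {f g : W → V}
    (hfg : ∀ j, r j < r i → f j = g j) :
    freeNeighbors G r par f i = freeNeighbors G r par g i := by
  have himage : ({j | r j < r i} : Finset W).image f = ({j | r j < r i} : Finset W).image g :=
    image_congr fun j hj ↦ hfg j (by simpa using hj)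
  rw [freeNeighbors, freeNeighbors, himage, hfg _ hi]

variable [Fintype V] [DecidableEq W] [Fintype (Copy T G)]

lemma sum_prod_inv_card_freeNeighbors_le (h : IsRankedTree T r ρ par) :
    ∑ φ : Copy T G, ∏ i ∈ univ.erase ρ, (#(freeNeighbors G r par φ i) : ℝ)⁻¹ ≤
      Fintype.card V := by
  let c (i : W) (f : W → V) : Finset V := if i = ρ then univ else freeNeighbors G r par f i
  have hc_past : ∀ i f g, (∀ j, r j < r i → f j = g j) → c i f = c i g := fun i f g hfg ↦ by
    by_cases hi : i = ρ
    · simp only [c, if_pos hi]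
    · simp only [c, if_neg hi, freeNeighbors_congr (h.lt i hi) hfg]
  have hc_mem (φ : Copy T G) (i : W) : φ i ∈ c i φ := by
    by_cases hi : i = ρ
    · simp only [c, if_pos hi, mem_univ]
    · simpa only [c, if_neg hi] using apply_mem_freeNeighbors h φ hi
  have hprod (φ : Copy T G) : ∏ i ∈ univ.erase ρ, (#(freeNeighbors G r par φ i) : ℝ)⁻¹ =
      Fintype.card V * ∏ i, (#(c i φ) : ℝ)⁻¹ := by
    have : Nonempty V := ⟨φ ρ⟩
    rw [← mul_prod_erase univ _ (mem_univ ρ)]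
    simp only [c, if_true, card_univ]
    rw [mul_inv_cancel_left₀ (by positivity)]
    exact prod_congr rfl fun i hi ↦ by rw [if_neg (ne_of_mem_erase hi)]
  simp_rw [hprod, ← mul_sum]
  refine mul_le_of_le_one_right (by positivity) (le_trans ?_ (sum_prod_inv_card_le_one hc_past))
  rw [← sum_image (f := fun f : W → V ↦ ∏ i, (#(c i f) : ℝ)⁻¹) (g := fun φ : Copy T G ↦ ⇑φ)
    DFunLike.coe_injective.injOn]
  refine sum_le_sum_of_subset_of_nonneg ?_ fun f _ _ ↦
    prod_nonneg fun i _ ↦ inv_nonneg.mpr (Nat.cast_nonneg _)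
  intro f hf
  obtain ⟨φ, -, rfl⟩ := mem_image.mp hf
  exact mem_filter.mpr ⟨mem_univ _, hc_mem φ⟩

lemma exp_one_sub_div_le {a D : ℝ} (ha : 0 < a) (hD : 0 < D) :
    Real.exp (1 - a / D) ≤ D * a⁻¹ := by
  have hle : a / D ≤ Real.exp (a / D - 1) := by simpa using Real.add_one_le_exp (a / D - 1)
  calc Real.exp (1 - a / D) = (Real.exp (a / D - 1))⁻¹ := by rw [← Real.exp_neg, neg_sub]
    _ ≤ (a / D)⁻¹ := inv_anti₀ (by positivity) hle
    _ = D * a⁻¹ := by rw [inv_div, div_eq_mul_inv]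

lemma sum_exp_greedySaving_le (h : IsRankedTree T r ρ par) {D : ℝ} (hD : 0 < D) :
    ∑ φ : Copy T G, Real.exp (greedySaving G r ρ par D φ) ≤
      Fintype.card V * D ^ (Fintype.card W - 1) := by
  have hexp (φ : Copy T G) : Real.exp (greedySaving G r ρ par D φ) ≤
      D ^ (Fintype.card W - 1) * ∏ i ∈ univ.erase ρ, (#(freeNeighbors G r par φ i) : ℝ)⁻¹ := by
    rw [greedySaving, Real.exp_sum, ← card_univ, ← card_erase_of_mem (mem_univ ρ), ← prod_const,
      ← prod_mul_distrib]
    refine prod_le_prod (fun _ _ ↦ by positivity) fun i hi ↦ exp_one_sub_div_le ?_ hD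
    exact_mod_cast card_pos.mpr ⟨_, apply_mem_freeNeighbors h φ (ne_of_mem_erase hi)⟩
  calc _ ≤ _ := sum_le_sum fun φ _ ↦ hexp φ
    _ ≤ D ^ (Fintype.card W - 1) * Fintype.card V := by
      rw [← mul_sum]
      gcongr
      exact sum_prod_inv_card_freeNeighbors_le h
    _ = _ := mul_comm _ _

lemma card_copy_mul_exp_le {β : Type*} [LinearOrder β] {r' : W → β}
    (h : IsRankedTree T r ρ par) (h' : IsRankedTree T r' ρ par) {D x : ℝ} (hD : 0 < D)
    (hx : ∀ φ : Copy T G,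
      x ≤ greedySaving G r ρ par D φ ∨ x ≤ greedySaving G r' ρ par D φ) :
    Fintype.card (Copy T G) * Real.exp x ≤
      2 * (Fintype.card V * D ^ (Fintype.card W - 1)) := by
  have hexp (φ : Copy T G) : Real.exp x ≤
      Real.exp (greedySaving G r ρ par D φ) + Real.exp (greedySaving G r' ρ par D φ) :=
    (hx φ).elim
      (fun hle ↦ (Real.exp_le_exp.mpr hle).trans (le_add_of_nonneg_right (Real.exp_nonneg _)))
      (fun hle ↦ (Real.exp_le_exp.mpr hle).trans (le_add_of_nonneg_left (Real.exp_nonneg _)))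
  calc (Fintype.card (Copy T G) : ℝ) * Real.exp x
      = ∑ _φ : Copy T G, Real.exp x := by simp
    _ ≤ _ := sum_le_sum fun φ _ ↦ hexp φ
    _ ≤ _ := by
      rw [sum_add_distrib, two_mul]
      exact add_le_add (sum_exp_greedySaving_le h hD) (sum_exp_greedySaving_le h' hD)

end Saving

section Leaves

variable {W α β : Type*} [Fintype W] [DecidableEq W] {ρ : W} {par : W → W}

/-- The vertices that have a child in the tree with root `ρ` and parent map `par`; the others are
its leaves. -/
def internalVertices (ρ : W) (par : W → W) : Finset W :=
  (univ.erase ρ).image par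

lemma parent_mem_internalVertices {i : W} (hi : i ≠ ρ) : par i ∈ internalVertices ρ par :=
  mem_image_of_mem par (mem_erase.mpr ⟨hi, mem_univ i⟩)

/-- The rank that puts the internal vertices first, ordered by `r`, and the leaves last, ordered by
`s`. -/
def leavesLast (ρ : W) (par : W → W) (r : W → α) (s : W → β) (i : W) : α ⊕ₗ β :=
  if i ∈ internalVertices ρ par then Sum.inlₗ (r i) else Sum.inrₗ (s i)

variable [LinearOrder α] [LinearOrder β] {T : SimpleGraph W} {r : W → α} {s : W → β}

lemma root_mem_internalVertices [Nontrivial W] (h : IsRankedTree T r ρ par) :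
    ρ ∈ internalVertices ρ par := by
  obtain ⟨w, hw⟩ := exists_ne ρ
  obtain ⟨m, hm, hmin⟩ :=
    exists_min_image (univ.erase ρ) r ⟨w, mem_erase.mpr ⟨hw, mem_univ w⟩⟩
  have hmρ : m ≠ ρ := ne_of_mem_erase hm
  have hpar : par m = ρ := by
    by_contra hne
    exact (h.lt m hmρ).not_ge (hmin _ (mem_erase.mpr ⟨hne, mem_univ _⟩))
  simpa only [hpar] using parent_mem_internalVertices (par := par) hmρ

lemma isRankedTree_leavesLast (h : IsRankedTree T r ρ par) :
    IsRankedTree T (leavesLast ρ par r s) ρ par where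
  adj := h.adj
  lt i hi := by
    by_cases hint : i ∈ internalVertices ρ par
    · simpa [leavesLast, hint, parent_mem_internalVertices hi] using h.lt i hi
    · simp [leavesLast, hint, parent_mem_internalVertices hi]

lemma leavesLast_lt_or_leavesLast_toDual_lt (hs : Injective s) {i j : W}
    (hi : i ∉ internalVertices ρ par) (hji : j ≠ i) :
    leavesLast ρ par r s j < leavesLast ρ par r s i ∨
      leavesLast ρ par r (OrderDual.toDual ∘ s) j <
        leavesLast ρ par r (OrderDual.toDual ∘ s) i := by
  by_cases hj : j ∈ internalVertices ρ par
  · simp [leavesLast, hi, hj]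
  · simpa [leavesLast, hi, hj] using (hs.ne hji).lt_or_gt

end Leaves

section SavingBounds

variable {V W α β : Type*} [LinearOrder α] [LinearOrder β] {G : SimpleGraph V}
  [G.LocallyFinite]

lemma two_mul_sum_card_neighbors_lt_le [Fintype V] (q : V → α) :
    2 * ∑ v, #{x ∈ G.neighborFinset v | q v < q x} ≤ ∑ v, G.degree v := by
  classical
  have sum_lt_eq_sum_gt : ∑ v, #{x ∈ G.neighborFinset v | q v < q x} =
      ∑ v, #{x ∈ G.neighborFinset v | q x < q v} := by
    convert sum_card_bipartiteAbove_eq_sum_card_bipartiteBelow (s := univ) (t := univ)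
      (fun v x ↦ G.Adj v x ∧ q v < q x) using 3 with v _ v _
    · ext x; simp
    · ext x; simp [G.adj_comm]
  rw [two_mul]
  nth_rw 2 [sum_lt_eq_sum_gt]
  rw [← sum_add_distrib]
  gcongr with v
  rw [← card_union_of_disjoint (disjoint_filter.mpr fun x _ hx ↦ hx.not_gt)]
  exact card_le_card (union_subset (filter_subset _ _) (filter_subset _ _))

variable [DecidableEq V] [Fintype W] {r : W → α} {r' : W → β} {ρ : W} {par : W → W} {D : ℝ}

lemma card_freeNeighbors_add_card_freeNeighbors_le (e : W ≃ V) {i : W}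
    (hi : ∀ j ≠ i, r j < r i ∨ r' j < r' i) :
    #(freeNeighbors G r par e i) + #(freeNeighbors G r' par e i) ≤ G.degree (e (par i)) + 1 := by
  rw [← card_union_add_card_inter]
  refine add_le_add (card_le_card (union_subset sdiff_subset sdiff_subset)) ?_
  have hsub : freeNeighbors G r par e i ∩ freeNeighbors G r' par e i ⊆ {e i} := by
    intro x hx
    obtain ⟨j, rfl⟩ := e.surjective x
    simp only [freeNeighbors, mem_inter, mem_sdiff, mem_image, mem_filter_univ, not_exists,
      not_and] at hx
    by_contra hne
    rcases hi j (fun hji ↦ hne (by simp [hji])) with hlt | hlt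
    · exact hx.1.2 j hlt rfl
    · exact hx.2.2 j hlt rfl
  exact card_le_card hsub

variable [DecidableEq W]

lemma sum_le_greedySaving (hD : 0 < D) (hdeg : ∀ v, (G.degree v : ℝ) ≤ D) (f : W → V)
    {s : Finset W} (hs : s ⊆ univ.erase ρ) :
    ∑ i ∈ s, (1 - #(freeNeighbors G r par f i) / D) ≤ greedySaving G r ρ par D f := by
  refine sum_le_sum_of_subset_of_nonneg hs fun i _ _ ↦ ?_
  have hcard : (#(freeNeighbors G r par f i) : ℝ) ≤ G.degree (f (par i)) := by
    exact_mod_cast card_le_card sdiff_subset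
  exact sub_nonneg.mpr ((div_le_one hD).mpr (hcard.trans (hdeg _)))

variable {T : SimpleGraph W}

lemma two_mul_sum_card_freeNeighbors_le [Fintype V] (h : IsRankedTree T r ρ par) (e : W ≃ V)
    {s : Finset W} (hs : s ⊆ univ.erase ρ) (hpar : Set.InjOn par s) :
    2 * ∑ i ∈ s, #(freeNeighbors G r par e i) ≤ ∑ v, G.degree v := by
  let q : V → α := r ∘ e.symm
  have free_subset (i : W) (hi : i ∈ s) : freeNeighbors G r par e i ⊆
      {x ∈ G.neighborFinset (e (par i)) | q (e (par i)) < q x} := by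
    intro x hx
    obtain ⟨j, rfl⟩ := e.surjective x
    have hij : ¬ r j < r i := fun hlt ↦
      (mem_sdiff.mp hx).2 (mem_image_of_mem e (by simpa using hlt))
    have hlt : r (par i) < r j := (h.lt i (ne_of_mem_erase (hs hi))).trans_le (not_lt.mp hij)
    exact mem_filter.mpr ⟨(mem_sdiff.mp hx).1, by simpa [q] using hlt⟩
  refine le_trans (Nat.mul_le_mul_left 2 ?_) (two_mul_sum_card_neighbors_lt_le q)
  calc ∑ i ∈ s, #(freeNeighbors G r par e i)
      ≤ ∑ i ∈ s, #{x ∈ G.neighborFinset (e (par i)) | q (e (par i)) < q x} :=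
        sum_le_sum fun i hi ↦ card_le_card (free_subset i hi)
    _ = ∑ v ∈ s.image (e ∘ par), #{x ∈ G.neighborFinset v | q v < q x} := by
        rw [sum_image (e.injective.comp_injOn hpar)]
        rfl
    _ ≤ ∑ v, #{x ∈ G.neighborFinset v | q v < q x} := sum_le_sum_of_subset (subset_univ _)

lemma card_internalVertices_sub_le_greedySaving (h : IsRankedTree T r ρ par) (hD : 0 < D)
    (hdeg : ∀ v, (G.degree v : ℝ) ≤ D) (e : W ≃ V) :
    #(internalVertices ρ par) - (Fintype.card W : ℝ) / 2 ≤ greedySaving G r ρ par D e := by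
  let _ : Fintype V := Fintype.ofEquiv W e
  obtain ⟨s, hs, hpar, himage⟩ := exists_subset_injOn_image_eq_of_surjOn
    (f := par) (univ.erase ρ : Finset W) (internalVertices ρ par) (by
      simp [internalVertices, Set.surjOn_image])
  have hs : s ⊆ univ.erase ρ := by exact_mod_cast hs
  refine le_trans ?_ (sum_le_greedySaving hD hdeg e hs)
  have hfree : 2 * ∑ i ∈ s, (#(freeNeighbors G r par e i) : ℝ) ≤ Fintype.card W * D := by
    calc 2 * ∑ i ∈ s, (#(freeNeighbors G r par e i) : ℝ)
        ≤ ∑ v, (G.degree v : ℝ) := by exact_mod_cast two_mul_sum_card_freeNeighbors_le h e hs hpar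
      _ ≤ ∑ _v : V, D := sum_le_sum fun v _ ↦ hdeg v
      _ = Fintype.card W * D := by simp [Fintype.card_congr e]
  have hhalf : (∑ i ∈ s, (#(freeNeighbors G r par e i) : ℝ)) / D ≤ Fintype.card W / 2 := by
    rw [div_le_iff₀ hD]
    linarith
  rw [sum_sub_distrib, ← sum_div, ← himage, card_image_of_injOn hpar]
  simpa only [sum_const, nsmul_one] using sub_le_sub_left hhalf _

lemma card_leaves_mul_le_greedySaving_add_greedySaving [Nontrivial W] {s : W → β}
    (hs : Injective s) (h : IsRankedTree T r ρ par) (hD : 0 < D)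
    (hdeg : ∀ v, (G.degree v : ℝ) ≤ D) (e : W ≃ V) :
    #(internalVertices ρ par)ᶜ * (1 - 1 / D) ≤
      greedySaving G (leavesLast ρ par r s) ρ par D e +
        greedySaving G (leavesLast ρ par r (OrderDual.toDual ∘ s)) ρ par D e := by
  have hsub : (internalVertices ρ par)ᶜ ⊆ univ.erase ρ := fun i hi ↦
    mem_erase.mpr ⟨by rintro rfl; exact mem_compl.mp hi (root_mem_internalVertices h), mem_univ i⟩
  refine le_trans ?_
    (add_le_add (sum_le_greedySaving hD hdeg e hsub) (sum_le_greedySaving hD hdeg e hsub))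
  rw [← sum_add_distrib, ← nsmul_eq_mul]
  refine card_nsmul_le_sum _ _ _ fun i hi ↦ ?_
  have hcard : #(freeNeighbors G (leavesLast ρ par r s) par e i) +
      #(freeNeighbors G (leavesLast ρ par r (OrderDual.toDual ∘ s)) par e i) ≤
        G.degree (e (par i)) + 1 :=
    card_freeNeighbors_add_card_freeNeighbors_le e fun _ hj ↦
      leavesLast_lt_or_leavesLast_toDual_lt hs (mem_compl.mp hi) hj
  have hle : (#(freeNeighbors G (leavesLast ρ par r s) par e i) : ℝ) +
      #(freeNeighbors G (leavesLast ρ par r (OrderDual.toDual ∘ s)) par e i) ≤ D + 1 :=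
    le_trans (by exact_mod_cast hcard) (add_le_add_left (hdeg (e (par i))) 1)
  have hdiv := div_le_div_of_nonneg_right hle hD.le
  rw [add_div, add_div, div_self hD.ne'] at hdiv
  linarith

end SavingBounds

section Counting

variable {V W : Type*} [Fintype V] [Fintype W] {G : SimpleGraph V} {T : SimpleGraph W}

lemma card_copy_le_card_pow [Fintype (Copy T G)] :
    Fintype.card (Copy T G) ≤ Fintype.card V ^ Fintype.card W := by
  classical
  rw [← Fintype.card_fun]
  exact Fintype.card_le_of_injective _ DFunLike.coe_injective

variable [G.LocallyFinite]

lemma card_copy_mul_exp_le_of_connected [Nontrivial W] [Fintype (Copy T G)] (hT : T.Connected)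
    (hcard : Fintype.card W = Fintype.card V) {D : ℝ} (hD : 10 ≤ D)
    (hdeg : ∀ v, (G.degree v : ℝ) ≤ D) :
    Fintype.card (Copy T G) * Real.exp (Fintype.card W / 25) ≤
      2 * (Fintype.card W * D ^ (Fintype.card W - 1)) := by
  classical
  have hD0 : 0 < D := by linarith
  obtain ⟨ρ⟩ := hT.nonempty
  obtain ⟨par, h⟩ := exists_isRankedTree_dist hT ρ
  let toEquiv (φ : Copy T G) : W ≃ V :=
    .ofBijective φ ((Fintype.bijective_iff_injective_and_card _).mpr ⟨φ.injective, hcard⟩)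
  nth_rw 2 [hcard]
  have hcompl : (#(internalVertices ρ par) : ℝ) + #(internalVertices ρ par)ᶜ = Fintype.card W := by
    exact_mod_cast card_add_card_compl _
  by_cases hleaves : (#(internalVertices ρ par)ᶜ : ℝ) ≤ Fintype.card W / 10
  · refine card_copy_mul_exp_le h h hD0 fun φ ↦ Or.inl ?_
    have hsaving := card_internalVertices_sub_le_greedySaving h hD0 hdeg (toEquiv φ)
    exact le_trans (by linarith) hsaving
  · refine card_copy_mul_exp_le
      (isRankedTree_leavesLast (s := Fintype.equivFin W) h)
      (isRankedTree_leavesLast (s := OrderDual.toDual ∘ Fintype.equivFin W) h) hD0 fun φ ↦ ?_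
    have hsaving := card_leaves_mul_le_greedySaving_add_greedySaving
      (Fintype.equivFin W).injective h hD0 hdeg (toEquiv φ)
    have hinv : 1 / D ≤ 1 / 10 := by gcongr
    have hmany : (Fintype.card W : ℝ) / 10 * (1 - 1 / 10) ≤
        #(internalVertices ρ par)ᶜ * (1 - 1 / D) := by
      gcongr
      exact (not_le.mp hleaves).le
    by_contra! hlt
    have hsum := hsaving.trans_lt (add_lt_add hlt.1 hlt.2)
    linarith [(Fintype.card W).cast_nonneg (α := ℝ)]

lemma two_mul_le_exp {x : ℝ} (hx : 5000 ≤ x) : 2 * x ≤ Real.exp (3 / 100 * x) := by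
  have := Real.quadratic_le_exp_of_nonneg (show 0 ≤ 3 / 100 * x by positivity)
  nlinarith

lemma two_mul_mul_pow_le_exp_mul {n : ℕ} (hn : 5000 ≤ (n : ℝ)) {d : ℝ} (hd : 1 ≤ d) :
    2 * (n * ((1 + 1 / 1000) * d) ^ (n - 1)) ≤
      Real.exp (-(n : ℝ) / 1000) * d ^ n * Real.exp (n / 25) := by
  have hpow : ((1 + 1 / 1000) * d) ^ (n - 1) ≤ Real.exp (n / 1000) * d ^ n :=
    calc ((1 + 1 / 1000) * d) ^ (n - 1) ≤ ((1 + 1 / 1000) * d) ^ n :=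
          pow_le_pow_right₀ (by linarith) (n.sub_le 1)
      _ ≤ (Real.exp (1 / 1000) * d) ^ n := by
          gcongr
          linarith [Real.add_one_le_exp (1 / 1000 : ℝ)]
      _ = Real.exp (n / 1000) * d ^ n := by
          rw [mul_pow, ← Real.exp_nat_mul, mul_one_div]
  calc 2 * (n * ((1 + 1 / 1000) * d) ^ (n - 1))
      = 2 * n * ((1 + 1 / 1000) * d) ^ (n - 1) := by ring
    _ ≤ Real.exp (3 / 100 * n) * (Real.exp (n / 1000) * d ^ n) := by
      gcongr
      exact two_mul_le_exp hn
    _ = Real.exp (3 / 100 * n + n / 1000) * d ^ n := by rw [Real.exp_add, mul_assoc]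
    _ ≤ Real.exp (-(n : ℝ) / 1000 + n / 25) * d ^ n :=
      mul_le_mul_of_nonneg_right (Real.exp_le_exp.mpr (by linarith)) (by positivity)
    _ = Real.exp (-(n : ℝ) / 1000) * d ^ n * Real.exp (n / 25) := by rw [Real.exp_add]; ring

lemma card_copy_le_exp_mul_pow [Fintype (Copy T G)] (hT : T.Connected)
    (hcard : Fintype.card W = Fintype.card V) {d : ℝ} (hd : 10 ^ 4 ≤ d)
    (hdeg : ∀ v, (G.degree v : ℝ) ≤ (1 + 1 / 1000) * d) :
    (Fintype.card (Copy T G) : ℝ) ≤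
      Real.exp (-(Fintype.card W : ℝ) / 1000) * d ^ Fintype.card W := by
  by_cases hsmall : (Fintype.card V : ℝ) ≤ d / 2
  · have hbase : (Fintype.card V : ℝ) ≤ Real.exp (-1 / 1000) * d := by
      nlinarith [Real.add_one_le_exp (-1 / 1000 : ℝ)]
    calc (Fintype.card (Copy T G) : ℝ) ≤ (Fintype.card V : ℝ) ^ Fintype.card W := by
          exact_mod_cast card_copy_le_card_pow
      _ ≤ (Real.exp (-1 / 1000) * d) ^ Fintype.card W := by gcongr
      _ = _ := by
          rw [mul_pow, ← Real.exp_nat_mul]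
          ring_nf
  · have hlarge : (5000 : ℝ) ≤ Fintype.card W := by
      rw [hcard]
      linarith
    have : Nontrivial W := Fintype.one_lt_card_iff_nontrivial.mp <| by
      exact_mod_cast (show (1 : ℝ) < 5000 by norm_num).trans_le hlarge
    refine le_of_mul_le_mul_right ?_ (Real.exp_pos (Fintype.card W / 25))
    exact (card_copy_mul_exp_le_of_connected hT hcard (by linarith) hdeg).trans
      (two_mul_mul_pow_le_exp_mul hlarge (by linarith))

end Counting

/-- A copy of `T` in `G`, as bundled in the library, is the same as an injective map that preserves
adjacency. -/
def injectiveHomEquivCopy {V W : Type*} (T : SimpleGraph W) (G : SimpleGraph V) :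
    {φ : W → V // Injective φ ∧ ∀ u w, T.Adj u w → G.Adj (φ u) (φ w)} ≃ Copy T G where
  toFun φ := ⟨⟨φ.1, fun h ↦ φ.2.2 _ _ h⟩, φ.2.1⟩
  invFun φ := ⟨φ, φ.injective, fun _ _ h ↦ φ.toHom.map_adj h⟩

theorem count_trees_general {V W : Type*} [Fintype V] [Fintype W] {G : SimpleGraph V}
    [G.LocallyFinite] {T : SimpleGraph W} (hT : T.Connected)
    (hcard : Fintype.card W = Fintype.card V) {d : ℝ} (hd : 10 ^ 4 ≤ d)
    (hdeg : ∀ v, (G.degree v : ℝ) ≤ (1 + 1 / 1000) * d) :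
    (Nat.card {φ : W → V // Injective φ ∧ ∀ u w, T.Adj u w → G.Adj (φ u) (φ w)} : ℝ) ≤
      Real.exp (-(Fintype.card W : ℝ) / 1000) * d ^ Fintype.card W := by
  classical
  rw [Nat.card_congr (injectiveHomEquivCopy T G), Nat.card_eq_fintype_card]
  exact card_copy_le_exp_mul_pow hT hcard hd hdeg

/-- Theorem 3.1: if `G` is an `n`-vertex almost `d`-regular graph and `T` is
any `n`-vertex tree, then the number of injective embeddings of `T` in `G` is
at most `e^{-n/1000}·dⁿ`. -/
theorem count_trees :
    ∃ d₀ : ℝ, 0 < d₀ ∧ ∀ d : ℕ, d₀ ≤ d →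
      ∀ (V W : Type) [Fintype V] [Fintype W] [DecidableEq V] [DecidableEq W]
        (n : ℕ) (_ : Fintype.card V = n) (_ : Fintype.card W = n)
        (G : SimpleGraph V) [DecidableRel G.Adj]
        (T : SimpleGraph W) [DecidableRel T.Adj] (_ : T.IsTree)
        (_ : ∀ v, (1 - (10:ℝ) ^ (-10 : ℤ)) * d ≤ (G.degree v : ℝ) ∧
              (G.degree v : ℝ) ≤ (1 + (10:ℝ) ^ (-10 : ℤ)) * d),
        (Nat.card {φ : W → V // Function.Injective φ ∧
            ∀ u w, T.Adj u w → G.Adj (φ u) (φ w)} : ℝ)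
          ≤ Real.exp (-(n : ℝ) / 1000) * (d : ℝ) ^ n := by
  refine ⟨10 ^ 4, by norm_num, fun d hd V W _ _ _ _ n hV hW G _ T _ hT hdeg ↦ hW ▸ ?_⟩
  exact count_trees_general hT.connected (hW.trans hV.symm) hd fun v ↦
    (hdeg v).2.trans (by gcongr; norm_num)
end

section
/- There exists a universal constant d₀ > 0 such that for all integers d ≥ d₀ the following holds. Let G be a connected n-vertex graph whose degrees all lie in [(1-10^{-10})d, (1+10^{-10})d], and let T be a uniformly random spanning tree of G. Then for every n-vertex tree T₀, Pr[T ≅ T₀] ≤ e^{-n/2000}. -/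
/-!
The probability is at most the number of embeddings of `T₀` into `G` divided by the number of
spanning trees of `G`; write `n` for the number of vertices and `d` for the approximate degree.

Placing the vertices of `T₀` one at a time, each next to its parent, gives at most about `d ^ n`
embeddings. Minc's bound on permanents improves this: a family of bijections `S → B` in which each
point has at most `d` candidate values has at most about `(d / 2) ^ #S` members. It is proved by
revealing a random member of the family along an order of `S` and along the reverse order. If `T₀`
has many leaves, apply it to their placement; otherwise almost every vertex has a child, and apply
it to the induced bijection between the images of these vertices and of one chosen child each.
Either way an exponential factor `exp (-n / 50)` is gained.

Conversely, there are about `d ^ n` functions sending every vertex to a neighbour. Such a function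
passes through a given vertex in a cycle of length `l` with probability at most `1 / d`, because the
last edge of the cycle could be redirected freely; so most of these functions have `o(n)` cycles.
Cutting every cycle at one point leaves a forest with `o(n)` components, which arises from a
spanning tree by deleting `o(n)` edges. So there are at least `d ^ n * exp (-o(n))` spanning trees.
-/

open Finset Function

section SequentialCounting

variable {X V R : Type*} [LinearOrder R] {ρ : X → R} {F : Finset (X → V)} {f : X → V} {a : X}

open Classical in
/-- The values a function of the family `F` can still take at `a` once its values at all points of
smaller rank are known to be those of `f`: the choices available at `a` when a member of `F` is
revealed point by point in the order of `ρ`. -/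
noncomputable def nextValues (ρ : X → R) (F : Finset (X → V)) (f : X → V) (a : X) : Finset V :=
  {g ∈ F | ∀ b, ρ b < ρ a → g b = f b}.image (· a)

lemma mem_nextValues {x : V} :
    x ∈ nextValues ρ F f a ↔ ∃ g ∈ F, (∀ b, ρ b < ρ a → g b = f b) ∧ g a = x := by
  simp only [nextValues, mem_image, mem_filter, and_assoc]

lemma card_nextValues_pos (hf : f ∈ F) : 0 < #(nextValues ρ F f a) :=
  card_pos.2 ⟨f a, mem_nextValues.2 ⟨f, hf, fun _ _ => rfl, rfl⟩⟩

lemma nextValues_mono {F' : Finset (X → V)} (h : F ⊆ F') :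
    nextValues ρ F f a ⊆ nextValues ρ F' f a := fun _ hx => by
  obtain ⟨g, hg, hgf⟩ := mem_nextValues.1 hx
  exact mem_nextValues.2 ⟨g, h hg, hgf⟩

lemma nextValues_eq_image_of_forall_le [DecidableEq V] {S : Finset X}
    (hoff : ∀ f ∈ F, ∀ g ∈ F, ∀ b ∉ S, f b = g b) (hmin : ∀ b ∈ S, ρ a ≤ ρ b) (hf : f ∈ F) :
    nextValues ρ F f a = F.image (· a) := by
  ext x
  rw [mem_nextValues, mem_image]
  refine exists_congr fun g => and_congr_right fun hg => and_iff_right fun b hb => ?_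
  exact hoff g hg f hf b fun hbS => hb.not_ge (hmin b hbS)

/-- The summand is the probability of obtaining `f` when its values are drawn in the order of `ρ`,
each uniformly among those still available. -/
theorem sum_prod_inv_card_nextValues_le_one (ρ : X → R) (S : Finset X) (F : Finset (X → V))
    (hoff : ∀ f ∈ F, ∀ g ∈ F, ∀ b ∉ S, f b = g b) :
    ∑ f ∈ F, ∏ a ∈ S, (#(nextValues ρ F f a) : ℝ)⁻¹ ≤ 1 := by
  classical
  induction S using Finset.induction_on_min_value ρ generalizing F with
  | empty =>
    have hF : #F ≤ 1 := card_le_one.2 fun f hf g hg =>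
      funext fun b => hoff f hf g hg b (notMem_empty b)
    simpa using hF
  | insert a S ha hmin ih =>
    have hfirst : ∀ f ∈ F, nextValues ρ F f a = F.image (· a) := fun f hf =>
      nextValues_eq_image_of_forall_le hoff ((forall_mem_insert ..).2 ⟨le_rfl, hmin⟩) hf
    have hfiber : ∀ x, ∑ f ∈ F with f a = x, ∏ b ∈ S, (#(nextValues ρ F f b) : ℝ)⁻¹ ≤ 1 := by
      intro x
      refine le_trans (sum_le_sum fun f hf => prod_le_prod (fun _ _ => by positivity) ?_)
        (ih {f ∈ F | f a = x} ?_)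
      · intro b _
        have := card_nextValues_pos (ρ := ρ) (a := b) hf
        have := card_le_card (nextValues_mono (ρ := ρ) (f := f) (a := b)
          (filter_subset (· a = x) F))
        gcongr
      · intro f hf g hg b hb
        rw [mem_filter] at hf hg
        rcases eq_or_ne b a with rfl | hba
        · rw [hf.2, hg.2]
        · exact hoff f hf.1 g hg.1 b (by simp [hba, hb])
    calc ∑ f ∈ F, ∏ b ∈ insert a S, (#(nextValues ρ F f b) : ℝ)⁻¹
        = ∑ f ∈ F, (#(F.image (· a)) : ℝ)⁻¹ * ∏ b ∈ S, (#(nextValues ρ F f b) : ℝ)⁻¹ :=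
          sum_congr rfl fun f hf => by rw [prod_insert ha, hfirst f hf]
      _ = (#(F.image (· a)) : ℝ)⁻¹ * ∑ x ∈ F.image (· a),
            ∑ f ∈ F with f a = x, ∏ b ∈ S, (#(nextValues ρ F f b) : ℝ)⁻¹ := by
          rw [← mul_sum, sum_fiberwise_of_maps_to (g := fun f : X → V => f a)
            fun f hf => mem_image_of_mem _ hf]
      _ ≤ (#(F.image (· a)) : ℝ)⁻¹ * ∑ x ∈ F.image (· a), 1 := by
          gcongr with x
          exact hfiber x
      _ ≤ 1 := by simpa using inv_mul_le_one

theorem card_le_prod_of_card_nextValues_le [Fintype X] (c : X → ℕ)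
    (hc : ∀ f ∈ F, ∀ a, #(nextValues ρ F f a) ≤ c a) : #F ≤ ∏ a, c a := by
  rcases F.eq_empty_or_nonempty with rfl | ⟨f₀, hf₀⟩
  · simp
  have hpos : ∀ a, 0 < c a := fun a => (card_nextValues_pos hf₀).trans_le (hc f₀ hf₀ a)
  have hprod : (0 : ℝ) < ∏ a, (c a : ℝ) := prod_pos fun a _ => mod_cast hpos a
  have hsum : ∑ _f ∈ F, ∏ a, (c a : ℝ)⁻¹ ≤ 1 := by
    refine le_trans (sum_le_sum fun f hf => prod_le_prod (fun _ _ => by positivity) ?_)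
      (sum_prod_inv_card_nextValues_le_one ρ univ F fun _ _ _ _ b hb => (hb (mem_univ b)).elim)
    intro a _
    have := card_nextValues_pos (ρ := ρ) (a := a) hf
    have := hc f hf a
    gcongr
  rw [sum_const, nsmul_eq_mul, prod_inv_distrib, ← div_eq_mul_inv, div_le_one hprod] at hsum
  exact_mod_cast hsum

end SequentialCounting

section Minc

variable {X V : Type*} {S : Finset X} {B : Set V} {F : Finset (X → V)}

/-- A value available at `a` in both orders cannot be taken by `f` at another point, as that point
precedes `a` in one of the two orders. -/
lemma card_nextValues_id_add_card_nextValues_toDual_le [LinearOrder X] {N : Finset V} {f : X → V}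
    {a : X} (hinj : ∀ f ∈ F, Set.InjOn f S) (himage : ∀ f ∈ F, f '' S = B) (hf : f ∈ F)
    (ha : a ∈ S) (hN : ∀ g ∈ F, g a ∈ N) :
    #(nextValues id F f a) + #(nextValues OrderDual.toDual F f a) ≤ #N + 1 := by
  classical
  have hfresh : ∀ g ∈ F, ∀ b ∈ S, b ≠ a → g b = f b → g a ≠ f b := fun g hg b hb hba hgb hga =>
    hba (hinj g hg hb ha (hgb.trans hga.symm))
  have hinter : nextValues id F f a ∩ nextValues OrderDual.toDual F f a ⊆ {f a} := by
    intro x hx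
    obtain ⟨hx₁, hx₂⟩ := mem_inter.1 hx
    obtain ⟨g₁, hg₁, hgf₁, rfl⟩ := mem_nextValues.1 hx₁
    obtain ⟨g₂, hg₂, hgf₂, heq⟩ := mem_nextValues.1 hx₂
    have hmem : g₁ a ∈ f '' S := by rw [himage f hf, ← himage g₁ hg₁]; exact ⟨a, ha, rfl⟩
    obtain ⟨b, hb, hbx⟩ := hmem
    rw [mem_singleton, ← hbx]
    rcases lt_trichotomy b a with hlt | rfl | hlt
    · exact absurd hbx.symm (hfresh g₁ hg₁ b hb hlt.ne (hgf₁ b hlt))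
    · rfl
    · exact absurd (heq.trans hbx.symm) (hfresh g₂ hg₂ b hb hlt.ne' (hgf₂ b hlt))
  have hsub : ∀ {R : Type _} [LinearOrder R] (ρ : X → R), nextValues ρ F f a ⊆ N := by
    intro R _ ρ x hx
    obtain ⟨g, hg, -, rfl⟩ := mem_nextValues.1 hx
    exact hN g hg
  calc #(nextValues id F f a) + #(nextValues OrderDual.toDual F f a)
      = #(nextValues id F f a ∪ nextValues OrderDual.toDual F f a)
        + #(nextValues id F f a ∩ nextValues OrderDual.toDual F f a) :=
        (card_union_add_card_inter _ _).symm
    _ ≤ #N + #{f a} :=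
        add_le_add (card_le_card (union_subset (hsub _) (hsub _))) (card_le_card hinter)
    _ = #N + 1 := by rw [card_singleton]

lemma two_mul_inv_le_inv_add_inv {x y z : ℝ} (hx : 0 < x) (hy : 0 < y) (hz : 0 < z)
    (hxy : x * y ≤ z ^ 2) : 2 * z⁻¹ ≤ x⁻¹ + y⁻¹ := by
  have hinv : (z⁻¹) ^ 2 ≤ x⁻¹ * y⁻¹ := by
    rw [inv_pow, ← mul_inv]
    exact inv_anti₀ (by positivity) hxy
  refine (sq_le_sq₀ (by positivity) (by positivity)).1 ?_
  nlinarith [sq_nonneg (x⁻¹ - y⁻¹)]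

/-- Minc's bound on permanents, for the bipartite graph joining `a ∈ S` to `N a ∩ B`. -/
theorem card_le_prod_card_add_one_div_two (N : X → Finset V)
    (hoff : ∀ f ∈ F, ∀ g ∈ F, ∀ b ∉ S, f b = g b) (hinj : ∀ f ∈ F, Set.InjOn f S)
    (himage : ∀ f ∈ F, f '' S = B) (hN : ∀ f ∈ F, ∀ a ∈ S, f a ∈ N a) :
    (#F : ℝ) ≤ ∏ a ∈ S, ((#(N a) : ℝ) + 1) / 2 := by
  obtain ⟨_, -⟩ := exists_wellFoundedLT X
  let v (f : X → V) (a : X) : ℝ := #(nextValues id F f a)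
  let w (f : X → V) (a : X) : ℝ := #(nextValues OrderDual.toDual F f a)
  set P := ∏ a ∈ S, ((#(N a) : ℝ) + 1) / 2
  have hP : 0 < P := prod_pos fun _ _ => by positivity
  have hterm : ∀ f ∈ F, 2 * P⁻¹ ≤ ∏ a ∈ S, (v f a)⁻¹ + ∏ a ∈ S, (w f a)⁻¹ := by
    intro f hf
    rw [prod_inv_distrib, prod_inv_distrib]
    refine two_mul_inv_le_inv_add_inv
      (prod_pos fun a _ => Nat.cast_pos.2 (card_nextValues_pos hf))
      (prod_pos fun a _ => Nat.cast_pos.2 (card_nextValues_pos hf)) hP ?_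
    rw [← prod_mul_distrib, ← prod_pow]
    refine prod_le_prod (fun _ _ => by positivity) fun a ha => ?_
    have hsum : v f a + w f a ≤ #(N a) + 1 := by
      simp only [v, w]
      exact_mod_cast card_nextValues_id_add_card_nextValues_toDual_le hinj himage hf ha
        fun g hg => hN g hg a ha
    have hv : 0 ≤ v f a := Nat.cast_nonneg _
    have hw : 0 ≤ w f a := Nat.cast_nonneg _
    nlinarith [sq_nonneg (v f a - w f a)]
  have hsum : (#F : ℝ) * (2 * P⁻¹) ≤ 1 + 1 := by
    calc (#F : ℝ) * (2 * P⁻¹) = ∑ _f ∈ F, 2 * P⁻¹ := by rw [sum_const, nsmul_eq_mul]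
      _ ≤ ∑ f ∈ F, (∏ a ∈ S, (v f a)⁻¹ + ∏ a ∈ S, (w f a)⁻¹) := sum_le_sum hterm
      _ ≤ 1 + 1 := by
          rw [sum_add_distrib]
          exact add_le_add (sum_prod_inv_card_nextValues_le_one _ S F hoff)
            (sum_prod_inv_card_nextValues_le_one _ S F hoff)
  rw [← div_le_one hP, div_eq_mul_inv]
  linarith

theorem card_le_div_two_pow {N : X → Finset V} {k : ℕ} (hk : ∀ a ∈ S, #(N a) < k)
    (hoff : ∀ f ∈ F, ∀ g ∈ F, ∀ b ∉ S, f b = g b) (hinj : ∀ f ∈ F, Set.InjOn f S)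
    (himage : ∀ f ∈ F, f '' S = B) (hN : ∀ f ∈ F, ∀ a ∈ S, f a ∈ N a) :
    (#F : ℝ) ≤ (k / 2) ^ #S := by
  rw [← prod_const]
  refine (card_le_prod_card_add_one_div_two N hoff hinj himage hN).trans
    (prod_le_prod (fun _ _ => by positivity) fun a ha => ?_)
  gcongr
  exact_mod_cast hk a ha

end Minc

section ParentMaps

variable {W : Type*} {p : W → W} {R : Finset W}

/-- `p` is the parent map of a rooted forest with root set `R`: outside `R`, passing to the parent
decreases some height function. The values of `p` on `R` are irrelevant. -/
def IsParentMap (p : W → W) (R : Finset W) : Prop :=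
  ∃ height : W → ℕ, ∀ a ∉ R, height (p a) < height a

lemma exists_isParentMap_of_connected {T : SimpleGraph W} (hT : T.Connected) (r : W) :
    ∃ p, IsParentMap p {r} ∧ ∀ a ∉ ({r} : Finset W), T.Adj (p a) a := by
  have hstep : ∀ a, ∃ b, a ≠ r → T.Adj b a ∧ T.dist b r < T.dist a r := by
    intro a
    obtain ⟨w, hw⟩ := hT.exists_walk_length_eq_dist a r
    cases w with
    | nil => exact ⟨r, fun h => absurd rfl h⟩
    | @cons _ b _ hab w =>
      rw [← hw, SimpleGraph.Walk.length_cons]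
      exact ⟨b, fun _ => ⟨hab.symm, Nat.lt_succ_of_le (SimpleGraph.dist_le w)⟩⟩
  choose p hp using hstep
  exact ⟨p, ⟨(T.dist · r), fun a ha => (hp a (by simpa using ha)).2⟩,
    fun a ha => (hp a (by simpa using ha)).1⟩

/-- Revealing `f` from the roots upwards, the value at `a` is confined to `N a (f (p a))`. -/
theorem IsParentMap.card_le {V : Type*} [Fintype V] [Finite W] (hp : IsParentMap p R)
    {F : Finset (W → V)} {N : W → V → Finset V} (hN : ∀ f ∈ F, ∀ a ∉ R, f a ∈ N a (f (p a)))
    {S : Finset W} {Δ : ℕ} (hΔ : 1 ≤ Δ) (hS : ∀ a ∈ S, ∀ v, #(N a v) ≤ Δ)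
    (hSc : ∀ a ∉ S, ∀ v, #(N a v) ≤ 1) : #F ≤ Fintype.card V ^ #R * Δ ^ #S := by
  classical
  have := Fintype.ofFinite W
  obtain ⟨height, hheight⟩ := hp
  calc #F ≤ ∏ a, (if a ∈ R then Fintype.card V else 1) * (if a ∈ S then Δ else 1) := by
        refine card_le_prod_of_card_nextValues_le (ρ := height) _ fun f _ a => ?_
        have hchoices : a ∉ R → nextValues height F f a ⊆ N a (f (p a)) := by
          intro ha x hx
          obtain ⟨g, hg, hgf, rfl⟩ := mem_nextValues.1 hx
          exact hgf (p a) (hheight a ha) ▸ hN g hg a ha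
        by_cases haR : a ∈ R
        · rw [if_pos haR]
          refine (card_le_univ _).trans (Nat.le_mul_of_pos_right _ ?_)
          split_ifs <;> omega
        · rw [if_neg haR, one_mul]
          refine (card_le_card (hchoices haR)).trans ?_
          split_ifs with haS
          exacts [hS a haS _, hSc a haS _]
    _ = Fintype.card V ^ #R * Δ ^ #S := by
        simp only [prod_mul_distrib, prod_ite_mem, univ_inter, prod_const]

end ParentMaps

section Embeddings

variable {V W : Type*} [Fintype V] [Fintype W] {G : SimpleGraph V} {p : W → W} {R : Finset W}

lemma cast_card_le_card_mul_of_mapsTo {α β : Type*} [DecidableEq β] {s : Finset α} {t : Finset β}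
    {φ : α → β} {M : ℝ} (hφ : ∀ x ∈ s, φ x ∈ t) (hM : ∀ y ∈ t, (#{x ∈ s | φ x = y} : ℝ) ≤ M) :
    (#s : ℝ) ≤ #t * M := by
  rw [card_eq_sum_card_fiberwise hφ, Nat.cast_sum, ← nsmul_eq_mul]
  exact sum_le_card_nsmul _ _ _ hM

open Classical in
/-- The bijections from `W` to the vertices of `G` that embed the rooted forest on `W` with parent
map `p` and root set `R`. -/
noncomputable def forestEmbeddings (G : SimpleGraph V) (p : W → W) (R : Finset W) :
    Finset (W → V) :=
  {f | Bijective f ∧ ∀ a ∉ R, G.Adj (f (p a)) (f a)}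

lemma mem_forestEmbeddings {f : W → V} :
    f ∈ forestEmbeddings G p R ↔ Bijective f ∧ ∀ a ∉ R, G.Adj (f (p a)) (f a) := by
  simp [forestEmbeddings]

lemma card_le_of_eqOn_of_subset_forestEmbeddings [DecidableEq W] [DecidableRel G.Adj]
    {Q : Finset W} (hRQ : R ⊆ Q) (hpQ : ∀ a ∉ R, p a ∈ Q) {Δ : ℕ} (hΔ : G.maxDegree < Δ)
    {F : Finset (W → V)} (hF : F ⊆ forestEmbeddings G p R)
    (heqOn : ∀ f ∈ F, ∀ g ∈ F, Set.EqOn f g Q) : (#F : ℝ) ≤ (Δ / 2 : ℝ) ^ #Qᶜ := by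
  rcases F.eq_empty_or_nonempty with rfl | ⟨f₀, hf₀⟩
  · rw [card_empty, Nat.cast_zero]; positivity
  have hemb : ∀ f ∈ F, Bijective f ∧ ∀ a ∉ R, G.Adj (f (p a)) (f a) := fun f hf =>
    mem_forestEmbeddings.1 (hF hf)
  refine card_le_div_two_pow (S := Qᶜ) (B := (f₀ '' Q)ᶜ)
    (N := fun a => G.neighborFinset (f₀ (p a))) ?_ ?_ ?_ ?_ ?_
  · exact fun a _ => (G.card_neighborFinset_eq_degree _).trans_lt
      ((G.degree_le_maxDegree _).trans_lt hΔ)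
  · exact fun f hf g hg b hb => heqOn f hf g hg (by simpa using hb)
  · exact fun f hf => (hemb f hf).1.injective.injOn
  · intro f hf
    rw [coe_compl, Set.image_compl_eq (hemb f hf).1, (heqOn f hf f₀ hf₀).image_eq]
  · intro f hf a ha
    have haR : a ∉ R := fun h => (mem_compl.1 ha) (hRQ h)
    rw [SimpleGraph.mem_neighborFinset, ← heqOn f hf f₀ hf₀ (hpQ a haR)]
    exact (hemb f hf).2 a haR

lemma card_image_piecewise_forestEmbeddings_le [DecidableEq V] [DecidableEq W]
    [DecidableRel G.Adj] (hp : IsParentMap p R) {Q : Finset W} (hpQ : ∀ a ∉ R, p a ∈ Q) {Δ : ℕ}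
    (hΔ : G.maxDegree < Δ) (f₀ : W → V) :
    #((forestEmbeddings G p R).image fun f => Q.piecewise f f₀) ≤
      Fintype.card V ^ #R * Δ ^ #Q := by
  refine hp.card_le (N := fun a v => if a ∈ Q then G.neighborFinset v else {f₀ a}) ?_
    (Nat.one_le_of_lt hΔ) ?_ ?_
  · simp only [mem_image, forall_exists_index, and_imp]
    rintro _ f hf rfl a ha
    by_cases haQ : a ∈ Q
    · simpa [haQ, hpQ a ha] using (mem_forestEmbeddings.1 hf).2 a ha
    · simp [haQ]
  · intro a ha v
    rw [if_pos ha, SimpleGraph.card_neighborFinset_eq_degree]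
    exact (G.degree_le_maxDegree v).trans hΔ.le
  · intro a ha v
    rw [if_neg ha, card_singleton]

/-- The roots and parents form a subforest, whose embeddings are counted from the roots upwards;
the remaining vertices are leaves, and Minc's bound applies to their placement. -/
theorem card_forestEmbeddings_le_of_leaves [DecidableEq W] [DecidableRel G.Adj]
    (hp : IsParentMap p R) {Δ : ℕ} (hΔ : G.maxDegree < Δ) :
    (#(forestEmbeddings G p R) : ℝ) ≤ Fintype.card V ^ #R * (Δ : ℝ) ^ Fintype.card W *
      (1 / 2) ^ #(R ∪ Rᶜ.image p)ᶜ := by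
  classical
  set Q := R ∪ Rᶜ.image p
  have hpQ : ∀ a ∉ R, p a ∈ Q := fun a ha =>
    mem_union_right _ (mem_image_of_mem p (mem_compl.2 ha))
  rcases (forestEmbeddings G p R).eq_empty_or_nonempty with hempty | ⟨f₀, -⟩
  · rw [hempty, card_empty, Nat.cast_zero]; positivity
  have hfiber : ∀ y, (#{f ∈ forestEmbeddings G p R | Q.piecewise f f₀ = y} : ℝ) ≤
      (Δ / 2 : ℝ) ^ #Qᶜ := by
    intro y
    refine card_le_of_eqOn_of_subset_forestEmbeddings subset_union_left hpQ hΔ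
      (filter_subset _ _) fun f hf g hg a ha => ?_
    have hfg := congrFun ((mem_filter.1 hf).2.trans (mem_filter.1 hg).2.symm) a
    rwa [piecewise_eq_of_mem _ _ _ ha, piecewise_eq_of_mem _ _ _ ha] at hfg
  calc (#(forestEmbeddings G p R) : ℝ)
      ≤ #((forestEmbeddings G p R).image fun f => Q.piecewise f f₀) * (Δ / 2 : ℝ) ^ #Qᶜ :=
        cast_card_le_card_mul_of_mapsTo (fun f hf => mem_image_of_mem _ hf) fun y _ => hfiber y
    _ ≤ (Fintype.card V ^ #R * Δ ^ #Q) * (Δ / 2 : ℝ) ^ #Qᶜ := by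
        gcongr
        exact_mod_cast card_image_piecewise_forestEmbeddings_le hp hpQ hΔ f₀
    _ = _ := by
        rw [← card_add_card_compl Q, pow_add, div_eq_mul_one_div, mul_pow]
        ring

end Embeddings

section ChildMaps

variable {V W : Type*} [DecidableEq V] {c : W → W} {A : Finset V} {f : W → V}

/-- The map sending the image under `f` of a vertex `q` to the image of its chosen child `c q`,
and fixing every point outside `A`. Meaningful for injective `f` with `A` in its range. -/
noncomputable def childMap (c : W → W) (A : Finset V) (f : W → V) : V → V :=
  A.piecewise (extend f (f ∘ c) id) id

lemma childMap_of_notMem {v : V} (hv : v ∉ A) : childMap c A f v = v :=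
  piecewise_eq_of_notMem _ _ _ hv

lemma childMap_apply (hf : Injective f) {q : W} (hq : f q ∈ A) :
    childMap c A f (f q) = f (c q) := by
  rw [childMap, piecewise_eq_of_mem _ _ _ hq, hf.extend_apply, comp_apply]

variable [Fintype V] [Fintype W] [DecidableEq W] {G : SimpleGraph V} [DecidableRel G.Adj]
  {p : W → W} {R P : Finset W} {Δ : ℕ}

lemma card_image_childMap_le (hc : ∀ q ∈ P, c q ∉ R ∧ p (c q) = q) (hΔ : G.maxDegree < Δ)
    {F : Finset (W → V)} (hF : F ⊆ forestEmbeddings G p R) {B : Finset V}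
    (hA : ∀ f ∈ F, P.image f = A) (hB : ∀ f ∈ F, (P.image c).image f = B) :
    (#(F.image (childMap c A)) : ℝ) ≤ (Δ / 2 : ℝ) ^ #A := by
  have hinj : ∀ f ∈ F, Injective f := fun f hf => (mem_forestEmbeddings.1 (hF hf)).1.injective
  have hcinj : Set.InjOn c P := Set.LeftInvOn.injOn (f₁' := p) fun q hq => (hc q hq).2
  have hA' : ∀ f ∈ F, (A : Set V) = f '' P := fun f hf => by rw [← hA f hf, coe_image]
  have hon : ∀ f ∈ F, Set.EqOn (f ∘ c) (childMap c A f ∘ f) P := fun f hf q hq =>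
    (childMap_apply (hinj f hf) (hA f hf ▸ mem_image_of_mem f hq)).symm
  refine card_le_div_two_pow (B := B) (N := fun v => G.neighborFinset v) ?_ ?_ ?_ ?_ ?_
  · exact fun v _ => (G.card_neighborFinset_eq_degree v).trans_lt
      ((G.degree_le_maxDegree v).trans_lt hΔ)
  · simp only [forall_mem_image]
    exact fun f _ g _ v hv => (childMap_of_notMem hv).trans (childMap_of_notMem hv).symm
  · simp only [forall_mem_image]
    intro f hf
    rw [hA' f hf]
    exact ((hon f hf).injOn_iff.1 ((hinj f hf).comp_injOn hcinj)).image_of_comp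
  · simp only [forall_mem_image]
    intro f hf
    rw [hA' f hf, ← Set.image_comp, ← (hon f hf).image_eq, Set.image_comp, ← hB f hf, coe_image,
      coe_image]
  · simp only [forall_mem_image]
    intro f hf v hv
    obtain ⟨q, hq, rfl⟩ := mem_image.1 ((hA f hf).symm ▸ hv)
    have hadj := (mem_forestEmbeddings.1 (hF hf)).2 (c q) (hc q hq).1
    rwa [(hc q hq).2, ← comp_apply (f := f), hon f hf hq, ← SimpleGraph.mem_neighborFinset] at hadj

lemma card_le_of_childMap_eq (hp : IsParentMap p R) (hc : ∀ q ∈ P, c q ∉ R ∧ p (c q) = q)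
    (hΔ : G.maxDegree < Δ) {F : Finset (W → V)} (hF : F ⊆ forestEmbeddings G p R) {σ : V → V}
    (hA : ∀ f ∈ F, P.image f = A) (hσ : ∀ f ∈ F, childMap c A f = σ) :
    #F ≤ Fintype.card V ^ #R * Δ ^ #(P.image c)ᶜ := by
  refine hp.card_le (N := fun a v => if a ∈ P.image c then {σ v} else G.neighborFinset v) ?_
    (Nat.one_le_of_lt hΔ) ?_ ?_
  · intro f hf a ha
    have hemb := mem_forestEmbeddings.1 (hF hf)
    split_ifs with haC
    · obtain ⟨q, hq, rfl⟩ := mem_image.1 haC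
      rw [mem_singleton, (hc q hq).2, ← hσ f hf,
        childMap_apply hemb.1.injective (hA f hf ▸ mem_image_of_mem f hq)]
    · exact (SimpleGraph.mem_neighborFinset ..).2 (hemb.2 a ha)
  · intro a ha v
    rw [if_neg (mem_compl.1 ha), SimpleGraph.card_neighborFinset_eq_degree]
    exact (G.degree_le_maxDegree v).trans hΔ.le
  · intro a ha v
    rw [if_pos (by simpa using ha), card_singleton]

lemma card_le_of_image_eq_of_image_children_eq (hp : IsParentMap p R)
    (hc : ∀ q ∈ P, c q ∉ R ∧ p (c q) = q) (hΔ : G.maxDegree < Δ) {F : Finset (W → V)}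
    (hF : F ⊆ forestEmbeddings G p R) {B : Finset V} (hcard : #A = #P)
    (hA : ∀ f ∈ F, P.image f = A) (hB : ∀ f ∈ F, (P.image c).image f = B) :
    (#F : ℝ) ≤ Fintype.card V ^ #R * (Δ : ℝ) ^ Fintype.card W * (1 / 2) ^ #P := by
  have hcinj : Set.InjOn c P := Set.LeftInvOn.injOn (f₁' := p) fun q hq => (hc q hq).2
  have hσ (σ : V → V) : (#{f ∈ F | childMap c A f = σ} : ℝ) ≤
      Fintype.card V ^ #R * (Δ : ℝ) ^ #(P.image c)ᶜ := by
    exact_mod_cast card_le_of_childMap_eq hp hc hΔ ((filter_subset _ _).trans hF)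
      (fun f hf => hA f (mem_of_mem_filter f hf)) fun f hf => (mem_filter.1 hf).2
  calc (#F : ℝ) ≤ #(F.image (childMap c A)) * (Fintype.card V ^ #R * (Δ : ℝ) ^ #(P.image c)ᶜ) :=
        cast_card_le_card_mul_of_mapsTo (fun f hf => mem_image_of_mem _ hf) fun σ _ => hσ σ
    _ ≤ (Δ / 2 : ℝ) ^ #P * (Fintype.card V ^ #R * (Δ : ℝ) ^ #(P.image c)ᶜ) := by
        gcongr
        exact hcard ▸ card_image_childMap_le hc hΔ hF hA hB
    _ = Fintype.card V ^ #R * (Δ : ℝ) ^ Fintype.card W * (1 / 2) ^ #P := by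
        rw [← card_add_card_compl (P.image c), card_image_of_injOn hcinj, pow_add,
          div_eq_mul_one_div, mul_pow]
        ring

end ChildMaps

section ChildEmbeddings

variable {V W : Type*} [Fintype V] [Fintype W] {G : SimpleGraph V} [DecidableRel G.Adj]
  {p : W → W} {R : Finset W} {Δ : ℕ}

/-- An embedding is determined by the positions of the vertices of `P` and of their chosen
children, the bijection between these two sets that it induces, to which Minc's bound applies, and
its values outside the chosen children. -/
theorem card_forestEmbeddings_le_of_children {P : Finset W} {c : W → W} (hp : IsParentMap p R)
    (hc : ∀ q ∈ P, c q ∉ R ∧ p (c q) = q) (hΔ : G.maxDegree < Δ) :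
    (#(forestEmbeddings G p R) : ℝ) ≤ ((Fintype.card V).choose #P : ℝ) ^ 2 *
      (Fintype.card V ^ #R * (Δ : ℝ) ^ Fintype.card W * (1 / 2) ^ #P) := by
  classical
  have hcinj : Set.InjOn c P := Set.LeftInvOn.injOn (f₁' := p) fun q hq => (hc q hq).2
  set M : ℝ := Fintype.card V ^ #R * (Δ : ℝ) ^ Fintype.card W * (1 / 2) ^ #P
  calc (#(forestEmbeddings G p R) : ℝ)
      ≤ #((univ.powersetCard #P ×ˢ univ.powersetCard #P : Finset (Finset V × Finset V))) * M := by
        refine cast_card_le_card_mul_of_mapsTo (φ := fun f => (P.image f, (P.image c).image f))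
          (fun f hf => ?_) fun (A, B) hAB => ?_
        · have hinj := (mem_forestEmbeddings.1 hf).1.injective
          simp [mem_powersetCard, card_image_of_injective _ hinj, card_image_of_injOn hcinj]
        · simp only [Prod.mk.injEq]
          exact card_le_of_image_eq_of_image_children_eq hp hc hΔ (filter_subset _ _)
            (mem_powersetCard.1 (mem_product.1 hAB).1).2 (fun f hf => (mem_filter.1 hf).2.1)
            fun f hf => (mem_filter.1 hf).2.2
    _ = ((Fintype.card V).choose #P : ℝ) ^ 2 * M := by
        rw [card_product, card_powersetCard, card_univ, Nat.cast_mul, sq]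

end ChildEmbeddings

section Estimates

lemma card_filter_card_le_le_exp {α : Type*} (U : Finset α) (k : ℕ) {y : ℝ} (hy : 1 ≤ y) :
    (#{s ∈ U.powerset | #s ≤ k} : ℝ) ≤ Real.exp (#U / y) * y ^ k := by
  have : 0 < y := one_pos.trans_le hy
  have hsum : ∑ s ∈ U.powerset with #s ≤ k, (y ^ k)⁻¹ ≤ (y⁻¹ + 1) ^ #U := by
    rw [← sum_pow_mul_eq_add_pow y⁻¹ 1 U]
    refine (sum_le_sum fun s hs => ?_).trans
      (sum_le_sum_of_subset_of_nonneg (filter_subset _ _) fun _ _ _ => by positivity)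
    rw [one_pow, mul_one, inv_pow]
    exact inv_anti₀ (by positivity) (pow_le_pow_right₀ hy (mem_filter.1 hs).2)
  have hexp : (y⁻¹ + 1) ^ #U ≤ Real.exp (#U / y) := by
    rw [div_eq_mul_inv, Real.exp_nat_mul]
    exact pow_le_pow_left₀ (by positivity) (Real.add_one_le_exp _) _
  rw [sum_const, nsmul_eq_mul, ← div_eq_mul_inv, div_le_iff₀ (by positivity)] at hsum
  exact hsum.trans (by gcongr)

lemma cast_choose_le_exp_mul_pow (n k : ℕ) {y : ℝ} (hy : 1 ≤ y) :
    (n.choose k : ℝ) ≤ Real.exp (n / y) * y ^ k := by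
  have hsub : powersetCard k (range n) ⊆ {s ∈ (range n).powerset | #s ≤ k} := fun s hs => by
    rw [mem_powersetCard] at hs
    exact mem_filter.2 ⟨mem_powerset.2 hs.1, hs.2.le⟩
  calc (n.choose k : ℝ) = #(powersetCard k (range n)) := by rw [card_powersetCard, card_range]
    _ ≤ #{s ∈ (range n).powerset | #s ≤ k} := mod_cast card_le_card hsub
    _ ≤ Real.exp (n / y) * y ^ k := by simpa using card_filter_card_le_le_exp (range n) k hy

lemma one_half_pow_le_exp (k : ℕ) : (1 / 2 : ℝ) ^ k ≤ Real.exp (-(2 / 3 * k)) := by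
  have hhalf : (1 / 2 : ℝ) ≤ Real.exp (-(2 / 3)) := by
    rw [← Real.log_le_iff_le_exp (by norm_num), one_div, Real.log_inv]
    linarith [Real.log_two_gt_d9]
  calc (1 / 2 : ℝ) ^ k ≤ Real.exp (-(2 / 3)) ^ k := by gcongr
    _ = Real.exp (-(2 / 3 * k)) := by rw [← Real.exp_nat_mul]; ring_nf

lemma one_half_pow_le_two_mul_exp {n k : ℕ} (h : n ≤ 20 * (k + 1)) :
    (1 / 2 : ℝ) ^ k ≤ 2 * Real.exp (-n / 50) := by
  have h' : (n : ℝ) ≤ 20 * (k + 1) := mod_cast h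
  calc (1 / 2 : ℝ) ^ k ≤ Real.exp (-(2 / 3 * k)) := one_half_pow_le_exp k
    _ ≤ Real.exp (Real.log 2 + -n / 50) :=
        Real.exp_le_exp.2 (by linarith [Real.log_two_gt_d9])
    _ = 2 * Real.exp (-n / 50) := by rw [Real.exp_add, Real.exp_log two_pos]

lemma choose_sq_mul_one_half_pow_le_exp {n k : ℕ} (hk : k ≤ n) (h : 20 * (n - k) ≤ n) :
    (n.choose k : ℝ) ^ 2 * (1 / 2) ^ k ≤ Real.exp (-n / 50) := by
  have h16 : (16 : ℝ) ≤ Real.exp 3 := by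
    rw [← Real.exp_one_rpow, show (3 : ℝ) = (3 : ℕ) by norm_num, Real.rpow_natCast]
    calc (16 : ℝ) ≤ 2.7182818283 ^ 3 := by norm_num
      _ ≤ Real.exp 1 ^ 3 := by gcongr; exact Real.exp_one_gt_d9.le
  have hchoose : (n.choose k : ℝ) ≤ Real.exp (n / 16 + (n - k) * 3) := by
    calc (n.choose k : ℝ) = n.choose (n - k) := by rw [Nat.choose_symm hk]
      _ ≤ Real.exp (n / 16) * 16 ^ (n - k) := cast_choose_le_exp_mul_pow _ _ (by norm_num)
      _ ≤ Real.exp (n / 16) * Real.exp 3 ^ (n - k) := by gcongr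
      _ = Real.exp (n / 16 + (n - k) * 3) := by
          rw [← Real.exp_nat_mul, ← Real.exp_add, Nat.cast_sub hk]
  have h' : 20 * ((n : ℝ) - k) ≤ n := by rw [← Nat.cast_sub hk]; exact_mod_cast h
  calc (n.choose k : ℝ) ^ 2 * (1 / 2) ^ k
      ≤ Real.exp (n / 16 + (n - k) * 3) ^ 2 * Real.exp (-(2 / 3 * k)) := by
        gcongr
        exact one_half_pow_le_exp k
    _ = Real.exp (2 * (n / 16 + (n - k) * 3) + -(2 / 3 * k)) := by
        rw [← Real.exp_nat_mul, ← Real.exp_add, Nat.cast_ofNat]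
    _ ≤ Real.exp (-n / 50) := Real.exp_le_exp.2 (by linarith)

end Estimates

section LabelledCopies

variable {V W : Type*} [Fintype V] [Fintype W] {G : SimpleGraph V} {T₀ : SimpleGraph W}

lemma card_isTree_iso_le_labelledCopyCount :
    Nat.card {H : SimpleGraph V // H ≤ G ∧ H.IsTree ∧ Nonempty (H ≃g T₀)} ≤
      G.labelledCopyCount T₀ := by
  classical
  choose iso _ using fun H : {H : SimpleGraph V // H ≤ G ∧ H.IsTree ∧ Nonempty (H ≃g T₀)} =>
    exists_true_iff_nonempty.2 H.2.2.2
  let copy (H) : T₀.Copy G := (SimpleGraph.Copy.ofLE _ _ H.2.1).comp (iso H).symm.toCopy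
  rw [SimpleGraph.labelledCopyCount, ← Nat.card_eq_fintype_card]
  refine Nat.card_le_card_of_injective copy fun H K hHK => Subtype.ext ?_
  have hiso (w : W) : (iso H).symm w = (iso K).symm w := DFunLike.congr_fun hHK w
  ext u v
  obtain ⟨x, rfl⟩ := (iso H).symm.surjective u
  obtain ⟨y, rfl⟩ := (iso H).symm.surjective v
  rw [(iso H).symm.map_adj_iff, hiso, hiso, (iso K).symm.map_adj_iff]

lemma labelledCopyCount_le_card_forestEmbeddings (hcard : Fintype.card W = Fintype.card V)
    {p : W → W} {R : Finset W} (hadj : ∀ a ∉ R, T₀.Adj (p a) a) :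
    G.labelledCopyCount T₀ ≤ #(forestEmbeddings G p R) := by
  classical
  rw [SimpleGraph.labelledCopyCount, ← Fintype.card_coe]
  refine Fintype.card_le_of_injective (fun φ => ⟨φ, mem_forestEmbeddings.2
    ⟨(Fintype.bijective_iff_injective_and_card φ).2 ⟨φ.injective, hcard⟩,
      fun a ha => φ.toHom.map_adj (hadj a ha)⟩⟩) fun φ ψ h => ?_
  exact DFunLike.coe_injective (Subtype.ext_iff.1 h)

/-- Either at least a twentieth of the vertices, up to the root, are leaves, or all but a twentieth
have a child; each case saves a factor `1 / 2` per such vertex. -/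
theorem labelledCopyCount_le_exp [DecidableRel G.Adj] (hcard : Fintype.card W = Fintype.card V)
    (hT₀ : T₀.Connected) {Δ : ℕ} (hΔ : G.maxDegree < Δ) :
    (G.labelledCopyCount T₀ : ℝ) ≤ 2 * Fintype.card V * Δ ^ Fintype.card V *
      Real.exp (-Fintype.card V / 50) := by
  classical
  obtain ⟨r⟩ := hT₀.nonempty
  obtain ⟨p, hp, hadj⟩ := exists_isParentMap_of_connected hT₀ r
  set P := ({r}ᶜ : Finset W).image p
  set n := Fintype.card V
  have hPn : #P ≤ n := hcard ▸ card_le_univ P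
  refine (Nat.cast_le.2 (labelledCopyCount_le_card_forestEmbeddings hcard hadj)).trans ?_
  by_cases hmany : 20 * (n - #P) ≤ n
  · obtain ⟨c, hc⟩ : ∃ c : W → W, ∀ q ∈ P, c q ∉ ({r} : Finset W) ∧ p (c q) = q := by
      choose! c hc using fun q (hq : q ∈ P) => mem_image.1 hq
      exact ⟨c, fun q hq => ⟨mem_compl.1 (hc q hq).1, (hc q hq).2⟩⟩
    calc (#(forestEmbeddings G p {r}) : ℝ)
        ≤ (n.choose #P : ℝ) ^ 2 * (n ^ #{r} * (Δ : ℝ) ^ Fintype.card W * (1 / 2) ^ #P) :=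
          card_forestEmbeddings_le_of_children hp hc hΔ
      _ = n * Δ ^ n * ((n.choose #P : ℝ) ^ 2 * (1 / 2) ^ #P) := by
          rw [card_singleton, hcard]; ring
      _ ≤ n * Δ ^ n * (2 * Real.exp (-n / 50)) := by
          refine mul_le_mul_of_nonneg_left ?_ (by positivity)
          exact (choose_sq_mul_one_half_pow_le_exp hPn hmany).trans
            (le_mul_of_one_le_left (by positivity) one_le_two)
      _ = 2 * n * Δ ^ n * Real.exp (-n / 50) := by ring
  · have hleaves : n ≤ 20 * (#({r} ∪ P)ᶜ + 1) := by
      have := card_union_le {r} P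
      rw [card_compl, hcard]
      rw [card_singleton] at this
      omega
    calc (#(forestEmbeddings G p {r}) : ℝ)
        ≤ n ^ #{r} * (Δ : ℝ) ^ Fintype.card W * (1 / 2) ^ #({r} ∪ P)ᶜ :=
          card_forestEmbeddings_le_of_leaves hp hΔ
      _ ≤ n * Δ ^ n * (2 * Real.exp (-n / 50)) := by
          rw [card_singleton, pow_one, hcard]
          gcongr
          exact one_half_pow_le_two_mul_exp hleaves
      _ = 2 * n * Δ ^ n * Real.exp (-n / 50) := by ring

end LabelledCopies

section Cycles

variable {V : Type*} {h : V → V}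

lemma iterate_update_of_le_of_minimalPeriod_eq [DecidableEq V] {v : V} {l : ℕ}
    (hl : minimalPeriod h v = l + 1) (x : V) {i : ℕ} (hi : i ≤ l) :
    (update h (h^[l] v) x)^[i] v = h^[i] v := by
  induction i with
  | zero => rfl
  | succ i ih =>
    rw [iterate_succ_apply', iterate_succ_apply', ih (by omega)]
    refine update_of_ne (fun heq => ?_) _ _
    have := iterate_injOn_Iio_minimalPeriod (f := h) (x := v) (Set.mem_Iio.2 (by omega))
      (Set.mem_Iio.2 (by omega)) heq
    omega

/-- Redirecting the last edge of the cycle through `v` arbitrarily is injective, since the old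
function is recovered by closing the cycle again. -/
lemma card_filter_minimalPeriod_eq_mul_le [Fintype V] [DecidableEq V] {N : V → Finset V} {m : ℕ}
    (hm : ∀ v, m ≤ #(N v)) (v : V) (l : ℕ) :
    #{h ∈ Fintype.piFinset N | minimalPeriod h v = l + 1} * m ≤ #(Fintype.piFinset N) := by
  set B := {h ∈ Fintype.piFinset N | minimalPeriod h v = l + 1}
  let redirect (z : Σ _ : V → V, V) : V → V := update z.1 (z.1^[l] v) z.2
  let restore (g : V → V) : Σ _ : V → V, V := ⟨update g (g^[l] v) v, g (g^[l] v)⟩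
  calc #B * m ≤ #(B.sigma fun h => N (h^[l] v)) := by
        rw [card_sigma, ← smul_eq_mul]
        exact card_nsmul_le_sum _ _ _ fun h _ => hm _
    _ ≤ #(Fintype.piFinset N) := by
        refine card_le_card_of_injOn redirect ?_ (Set.LeftInvOn.injOn (f₁' := restore) ?_) <;>
          rintro ⟨h, x⟩ hz <;> obtain ⟨hB, hx⟩ := mem_sigma.1 (mem_coe.1 hz) <;>
          obtain ⟨hN, hl⟩ := mem_filter.1 hB
        · refine mem_coe.2 (Fintype.mem_piFinset.2 fun u => ?_)
          rcases eq_or_ne u (h^[l] v) with rfl | hu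
          · simpa [redirect] using hx
          · simpa [redirect, hu] using Fintype.mem_piFinset.1 hN u
        · have hback : h (h^[l] v) = v := by
            rw [← iterate_succ_apply' h, ← Nat.add_one, ← hl, iterate_minimalPeriod]
          have hlast := iterate_update_of_le_of_minimalPeriod_eq hl x le_rfl
          simp only [redirect, restore, hlast, update_self, update_idem]
          rw [update_eq_self_iff.2 hback.symm]

lemma card_filter_minimalPeriod_mem_Ioc_mul_le [Fintype V] [DecidableEq V] {N : V → Finset V}
    {m : ℕ} (hm : ∀ v, m ≤ #(N v)) (v : V) (L : ℕ) :
    #{h ∈ Fintype.piFinset N | minimalPeriod h v ∈ Ioc 0 L} * m ≤ L * #(Fintype.piFinset N) := by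
  have hcover : {h ∈ Fintype.piFinset N | minimalPeriod h v ∈ Ioc 0 L} ⊆
      (range L).biUnion fun l => {h ∈ Fintype.piFinset N | minimalPeriod h v = l + 1} := by
    intro h hh
    obtain ⟨hN, hL⟩ := mem_filter.1 hh
    rw [mem_Ioc] at hL
    exact mem_biUnion.2 ⟨minimalPeriod h v - 1, mem_range.2 (by omega),
      mem_filter.2 ⟨hN, by omega⟩⟩
  calc _ ≤ (∑ l ∈ range L, #{h ∈ Fintype.piFinset N | minimalPeriod h v = l + 1}) * m := by
        gcongr
        exact (card_le_card hcover).trans card_biUnion_le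
    _ ≤ ∑ _l ∈ range L, #(Fintype.piFinset N) := by
        rw [sum_mul]
        exact sum_le_sum fun l _ => card_filter_minimalPeriod_eq_mul_le hm v l
    _ = L * #(Fintype.piFinset N) := by rw [sum_const, card_range, smul_eq_mul]

lemma sum_card_filter_minimalPeriod_mem_Ioc_mul_le [Fintype V] [DecidableEq V]
    {N : V → Finset V} {m : ℕ} (hm : ∀ v, m ≤ #(N v)) (L : ℕ) :
    (∑ h ∈ Fintype.piFinset N, #{v | minimalPeriod h v ∈ Ioc 0 L}) * m ≤
      Fintype.card V * L * #(Fintype.piFinset N) := by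
  have hcomm := sum_card_bipartiteAbove_eq_sum_card_bipartiteBelow (s := Fintype.piFinset N)
    (t := univ) fun h v => minimalPeriod h v ∈ Ioc 0 L
  simp only [bipartiteAbove, bipartiteBelow] at hcomm
  rw [hcomm, sum_mul, mul_assoc]
  exact sum_le_card_nsmul _ _ _ fun v _ => card_filter_minimalPeriod_mem_Ioc_mul_le hm v L

/-- `R` contains exactly one point of every cycle of `h`, and no other point. -/
def IsCycleTransversal (h : V → V) (R : Finset V) : Prop :=
  (∀ v, ∃ i, h^[i] v ∈ R) ∧ ∀ v ∈ R, ∀ i, h^[i] v ∈ R → h^[i] v = v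

lemma exists_isCycleTransversal [Finite V] (h : V → V) : ∃ R, IsCycleTransversal h R := by
  classical
  have := Fintype.ofFinite V
  obtain ⟨R, -, hR⟩ := exists_minimal_le_of_wellFoundedLT
    (fun R : Finset V => ∀ v, ∃ i, h^[i] v ∈ R) univ fun v => ⟨0, mem_univ _⟩
  refine ⟨R, hR.prop, fun v hv i hi => by_contra fun hne => ?_⟩
  refine hR.not_prop_of_lt (erase_ssubset hv) fun u => ?_
  obtain ⟨j, hj⟩ := hR.prop u
  by_cases hju : h^[j] u = v
  · exact ⟨i + j, by rw [iterate_add_apply, hju]; exact mem_erase.2 ⟨hne, hi⟩⟩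
  · exact ⟨j, mem_erase.2 ⟨hju, hj⟩⟩

variable {R : Finset V}

lemma IsCycleTransversal.minimalPeriod_pos (hR : IsCycleTransversal h R) {v : V} (hv : v ∈ R) :
    0 < minimalPeriod h v := by
  obtain ⟨i, hi⟩ := hR.1 (h v)
  exact IsPeriodicPt.minimalPeriod_pos i.succ_pos (hR.2 v hv (i + 1) hi)

lemma IsCycleTransversal.isParentMap (hR : IsCycleTransversal h R) : IsParentMap h R := by
  classical
  obtain ⟨hhit, -⟩ := hR
  refine ⟨fun v => Nat.find (hhit v), fun v hv => ?_⟩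
  have hfind := Nat.find_spec (hhit v)
  obtain ⟨j, hj⟩ : ∃ j, Nat.find (hhit v) = j + 1 :=
    Nat.exists_eq_succ_of_ne_zero fun h0 => hv (by rwa [h0] at hfind)
  rw [hj] at hfind
  exact (Nat.lt_succ_of_le (Nat.find_min' _ hfind)).trans_eq hj.symm

/-- The cycles through these points are disjoint. -/
lemma IsCycleTransversal.mul_card_filter_minimalPeriod_le [Fintype V]
    (hR : IsCycleTransversal h R) (L : ℕ) :
    L * #{v ∈ R | L < minimalPeriod h v} ≤ Fintype.card V := by
  rw [← card_range L, ← card_product, ← card_univ, card_range]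
  refine card_le_card_of_injOn (fun z => h^[z.1] z.2) (by simp) ?_
  rintro ⟨i, v⟩ hz ⟨j, w⟩ hz' heq
  simp only [coe_product, Set.mem_prod, mem_coe, mem_range, mem_filter] at hz hz' heq
  obtain ⟨hi, hv, hvL⟩ := hz
  obtain ⟨hj, hw, hwL⟩ := hz'
  have hreach : h^[minimalPeriod h w - j + i] v = w := by
    rw [iterate_add_apply, heq, ← iterate_add_apply, Nat.sub_add_cancel (by omega),
      iterate_minimalPeriod]
  obtain rfl : w = v := hreach ▸ hR.2 v hv _ (hreach.symm ▸ hw)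
  rw [iterate_injOn_Iio_minimalPeriod (Set.mem_Iio.2 (hi.trans hvL))
    (Set.mem_Iio.2 (hj.trans hvL)) heq]

/-- A choice of one point on every cycle of `h`. -/
noncomputable def cycleRoots [Finite V] (h : V → V) : Finset V :=
  (exists_isCycleTransversal h).choose

lemma isCycleTransversal_cycleRoots [Finite V] (h : V → V) :
    IsCycleTransversal h (cycleRoots h) :=
  (exists_isCycleTransversal h).choose_spec

lemma card_cycleRoots_le [Fintype V] (h : V → V) {L : ℕ} (hL : 0 < L) :
    #(cycleRoots h) ≤ #{v | minimalPeriod h v ∈ Ioc 0 L} + Fintype.card V / L := by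
  have hR := isCycleTransversal_cycleRoots h
  rw [← card_filter_add_card_filter_not (fun v => minimalPeriod h v ≤ L)]
  refine add_le_add (card_le_card fun v hv => ?_) ?_
  · obtain ⟨hv, hvL⟩ := mem_filter.1 hv
    simpa using ⟨hR.minimalPeriod_pos hv, hvL⟩
  · rw [Nat.le_div_iff_mul_le hL, mul_comm]
    simpa only [not_le] using hR.mul_card_filter_minimalPeriod_le L

/-- Markov's inequality for the number of points on cycles of length at most `L`. -/
theorem card_piFinset_le_two_mul_card_filter_card_cycleRoots_le [Fintype V] [DecidableEq V]
    {N : V → Finset V} {m L : ℕ} (hm : ∀ v, m ≤ #(N v)) (hm0 : 0 < m) (hL : 0 < L) :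
    #(Fintype.piFinset N) ≤ 2 * #{h ∈ Fintype.piFinset N |
      #(cycleRoots h) ≤ 2 * Fintype.card V * L / m + Fintype.card V / L} := by
  set n := Fintype.card V
  set H := Fintype.piFinset N
  set good := {h ∈ H | #(cycleRoots h) ≤ 2 * n * L / m + n / L}
  have hbad : ∀ h ∈ H \ good, 2 * (n * L) + 1 ≤ #{v | minimalPeriod h v ∈ Ioc 0 L} * m := by
    intro h hh
    obtain ⟨hH, hgood⟩ := mem_sdiff.1 hh
    have hroots : 2 * n * L / m + n / L < #(cycleRoots h) :=
      not_le.1 fun hle => hgood (mem_filter.2 ⟨hH, hle⟩)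
    have hshort : #(cycleRoots h) ≤ #{v | minimalPeriod h v ∈ Ioc 0 L} + n / L :=
      card_cycleRoots_le h hL
    rw [Nat.succ_le_iff, ← Nat.div_lt_iff_lt_mul hm0, ← mul_assoc]
    omega
  have hmarkov : #(H \ good) * (2 * (n * L) + 1) ≤ n * L * #H := by
    refine le_trans ?_ (sum_card_filter_minimalPeriod_mem_Ioc_mul_le hm L)
    rw [sum_mul, ← smul_eq_mul]
    exact (card_nsmul_le_sum _ _ _ hbad).trans (sum_le_sum_of_subset sdiff_subset)
  have hhalf : 2 * #(H \ good) ≤ #H := by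
    by_contra! hlt
    have hmul : n * L * #H ≤ n * L * (2 * #(H \ good)) := Nat.mul_le_mul_left _ hlt.le
    have : #(H \ good) = 0 := by linarith
    omega
  have hgoodH : good ⊆ H := filter_subset _ H
  have := card_sdiff_add_card_eq_card hgoodH
  omega

end Cycles

section SpanningForests

variable {V : Type*}

lemma isAcyclic_of_adj_parent {F : SimpleGraph V} {p : V → V} {height : V → ℕ}
    (hF : ∀ u v, F.Adj u v → p u = v ∧ height v < height u ∨ p v = u ∧ height u < height v) :
    F.IsAcyclic := by
  rw [SimpleGraph.isAcyclic_iff_free_cycleGraph]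
  rintro n hn ⟨φ⟩
  obtain ⟨k, rfl⟩ : ∃ k, n = k + 3 := Nat.exists_eq_add_of_le' hn
  obtain ⟨i, hi⟩ := Finite.exists_max fun i : Fin (k + 3) => height (φ i)
  have hparent : ∀ j, (SimpleGraph.cycleGraph (k + 3)).Adj i j → p (φ i) = φ j := fun j hj =>
    ((hF _ _ (φ.toHom.map_adj hj)).resolve_right fun h => (hi j).not_gt h.2).1
  have hnext := hparent (i + 1) (SimpleGraph.cycleGraph_adj.2 (Or.inr (by simp)))
  have hprev := hparent (i - 1) (SimpleGraph.cycleGraph_adj.2 (Or.inl (by simp)))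
  have heq : i + 1 = i - 1 := φ.injective (hnext.symm.trans hprev)
  have htwo : (1 : Fin (k + 3)) + 1 = 0 :=
    add_left_cancel (a := i) (by rw [← add_assoc, heq, sub_add_cancel, add_zero])
  have hval : (1 + 1) % (k + 3) = 0 := by simpa [Fin.ext_iff, Fin.val_add] using htwo
  rw [Nat.mod_eq_of_lt (by omega)] at hval
  omega

/-- The undirected graph underlying the rooted forest with parent map `p` and root set `R`. -/
def parentGraph (p : V → V) (R : Finset V) : SimpleGraph V :=
  SimpleGraph.fromRel fun u v => u ∉ R ∧ p u = v

variable {p q : V → V} {R : Finset V}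

lemma parentGraph_le {G : SimpleGraph V} (hG : ∀ v ∉ R, G.Adj v (p v)) : parentGraph p R ≤ G := by
  rintro u v ⟨-, ⟨hu, rfl⟩ | ⟨hv, rfl⟩⟩
  exacts [hG u hu, (hG v hv).symm]

lemma IsParentMap.ne (hp : IsParentMap p R) {v : V} (hv : v ∉ R) : v ≠ p v := by
  obtain ⟨height, hheight⟩ := hp
  exact fun h => (hheight v hv).ne (congrArg height h.symm)

lemma IsParentMap.adj_parentGraph (hp : IsParentMap p R) {v : V} (hv : v ∉ R) :
    (parentGraph p R).Adj v (p v) :=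
  ⟨hp.ne hv, Or.inl ⟨hv, rfl⟩⟩

lemma IsParentMap.isAcyclic_parentGraph (hp : IsParentMap p R) : (parentGraph p R).IsAcyclic := by
  obtain ⟨height, hheight⟩ := hp
  refine isAcyclic_of_adj_parent (p := p) (height := height) ?_
  rintro u v ⟨-, ⟨hu, rfl⟩ | ⟨hv, rfl⟩⟩
  exacts [Or.inl ⟨rfl, hheight u hu⟩, Or.inr ⟨rfl, hheight v hv⟩]

lemma IsParentMap.eq_of_parentGraph_eq (hp : IsParentMap p R)
    (heq : parentGraph p R = parentGraph q R) {v : V} (hv : v ∉ R) : p v = q v := by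
  have hp' := hp
  obtain ⟨height, hheight⟩ := hp'
  induction hn : height v using Nat.strong_induction_on generalizing v with
  | _ n ih =>
    obtain ⟨-, ⟨-, hqv⟩ | ⟨hpvR, hqpv⟩⟩ := heq ▸ hp.adj_parentGraph hv
    · exact hqv.symm
    · have hpv : p (p v) = v := (ih _ (hn ▸ hheight v hv) hpvR rfl).trans hqpv
      have hlt := hheight (p v) hpvR
      rw [hpv] at hlt
      exact absurd hlt (hheight v hv).not_gt

lemma IsParentMap.card_le_card_edgeFinset_add [Fintype V] (hp : IsParentMap p R)
    [Fintype (parentGraph p R).edgeSet] :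
    Fintype.card V ≤ #(parentGraph p R).edgeFinset + #R := by
  classical
  rw [← card_compl_add_card R]
  gcongr
  refine card_le_card_of_injOn (fun v => s(v, p v)) (fun v hv => ?_) fun v hv w hw heq => ?_
  · simpa using hp.adj_parentGraph (by simpa using hv)
  · obtain ⟨height, hheight⟩ := hp
    have hv := hheight v (by simpa using hv)
    have hw := hheight w (by simpa using hw)
    rcases Sym2.eq_iff.1 heq with ⟨hvw, -⟩ | ⟨hvw, hwv⟩
    · exact hvw
    · rw [hwv] at hv
      rw [← hvw] at hw
      exact absurd hv hw.not_gt

variable [Fintype V] (G : SimpleGraph V)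

open Classical in
/-- The spanning trees of `G`, as graphs on the same vertex type. -/
noncomputable def spanningTrees : Finset (SimpleGraph V) :=
  {T | T ≤ G ∧ T.IsTree}

open Classical in
/-- The acyclic spanning subgraphs of `G` with at most `k` fewer edges than vertices, that is, with
at most `k` components. -/
noncomputable def spanningForests (k : ℕ) : Finset (SimpleGraph V) :=
  {F | F ≤ G ∧ F.IsAcyclic ∧ Fintype.card V ≤ #F.edgeFinset + k}

variable {G}

lemma mem_spanningTrees {T : SimpleGraph V} : T ∈ spanningTrees G ↔ T ≤ G ∧ T.IsTree := by
  simp [spanningTrees]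

lemma mem_spanningForests {F : SimpleGraph V} [Fintype F.edgeSet] {k : ℕ} :
    F ∈ spanningForests G k ↔
      F ≤ G ∧ F.IsAcyclic ∧ Fintype.card V ≤ #F.edgeFinset + k := by
  simp only [spanningForests, mem_filter, mem_univ, true_and]
  convert Iff.rfl

lemma card_isTree_eq_card_spanningTrees :
    Nat.card {H : SimpleGraph V // H ≤ G ∧ H.IsTree} = #(spanningTrees G) := by
  classical
  rw [Nat.card_eq_fintype_card, Fintype.card_subtype, spanningTrees]

/-- Every forest arises from a spanning tree containing it by deleting at most `k` edges. -/
lemma card_spanningForests_le (hG : G.Connected) (k : ℕ) {y : ℝ} (hy : 1 ≤ y) :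
    (#(spanningForests G k) : ℝ) ≤
      #(spanningTrees G) * (Real.exp (Fintype.card V / y) * y ^ k) := by
  classical
  have hcover : spanningForests G k ⊆ (spanningTrees G).biUnion fun T =>
      {s ∈ T.edgeFinset.powerset | #s ≤ k}.image fun s : Finset (Sym2 V) =>
        T.deleteEdges (s : Set (Sym2 V)) := by
    intro F hF
    obtain ⟨hFG, hacyc, hedges⟩ := mem_spanningForests.1 hF
    obtain ⟨T, hFT, hTG, hT⟩ := hG.exists_isTree_le_of_le_of_isAcyclic hFG hacyc
    have hsub : F.edgeFinset ⊆ T.edgeFinset := SimpleGraph.edgeFinset_subset_edgeFinset.2 hFT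
    refine mem_biUnion.2 ⟨T, mem_spanningTrees.2 ⟨hTG, hT⟩, mem_image.2
      ⟨T.edgeFinset \ F.edgeFinset, mem_filter.2 ⟨mem_powerset.2 sdiff_subset, ?_⟩, ?_⟩⟩
    · have := hT.card_edgeFinset
      rw [card_sdiff_of_subset hsub]
      omega
    · rw [← SimpleGraph.edgeFinset_inj, SimpleGraph.edgeFinset_deleteEdges,
        Finset.sdiff_sdiff_eq_self hsub]
  have htree : ∀ T ∈ spanningTrees G, (#{s ∈ T.edgeFinset.powerset | #s ≤ k} : ℝ) ≤
      Real.exp (Fintype.card V / y) * y ^ k := by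
    intro T hT
    refine (card_filter_card_le_le_exp _ k hy).trans ?_
    have := (mem_spanningTrees.1 hT).2.card_edgeFinset
    gcongr
    omega
  calc (#(spanningForests G k) : ℝ)
      ≤ ∑ T ∈ spanningTrees G, (#{s ∈ T.edgeFinset.powerset | #s ≤ k} : ℝ) := by
        exact_mod_cast (card_le_card hcover).trans
          (card_biUnion_le.trans (sum_le_sum fun T _ => card_image_le))
    _ ≤ #(spanningTrees G) * (Real.exp (Fintype.card V / y) * y ^ k) := by
        rw [← nsmul_eq_mul]
        exact sum_le_card_nsmul _ _ _ htree

lemma card_le_pow_of_eqOn_compl [DecidableEq V] {N : V → Finset V} {D : ℕ}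
    (hD : ∀ v, #(N v) ≤ D) {F : Finset (V → V)} (hF : F ⊆ Fintype.piFinset N)
    (heq : ∀ f ∈ F, ∀ g ∈ F, ∀ v ∉ R, f v = g v) : #F ≤ D ^ #R := by
  calc #F ≤ #(R.pi N) := by
        refine card_le_card_of_injOn (fun f v _ => f v) (fun f hf => ?_) fun f hf g hg hfg => ?_
        · exact mem_pi.2 fun v _ => Fintype.mem_piFinset.1 (hF hf) v
        · funext v
          by_cases hv : v ∈ R
          · exact congrFun (congrFun hfg v) hv
          · exact heq f hf g hg v hv
    _ ≤ D ^ #R := by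
        rw [card_pi]
        exact prod_le_pow_card _ _ _ fun v _ => hD v

/-- A function `h` moving every vertex to a neighbour is determined by its cycle roots, the forest
of the edges from the other vertices `v` to `h v`, and its values at the roots. -/
lemma card_filter_card_cycleRoots_le_le [DecidableEq V] [DecidableRel G.Adj]
    (hG : G.Connected) (hmax : 0 < G.maxDegree) (k : ℕ) {y : ℝ} (hy : 1 ≤ y) :
    (#{h ∈ Fintype.piFinset fun v => G.neighborFinset v | #(cycleRoots h) ≤ k} : ℝ) ≤
      #(spanningTrees G) * (Real.exp (Fintype.card V / y) * y ^ k) ^ 2 * G.maxDegree ^ k := by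
  classical
  set H := {h ∈ Fintype.piFinset fun v => G.neighborFinset v | #(cycleRoots h) ≤ k}
  have hparent (h : V → V) : IsParentMap h (cycleRoots h) :=
    (isCycleTransversal_cycleRoots h).isParentMap
  have hmaps : ∀ h ∈ H, (parentGraph h (cycleRoots h), cycleRoots h) ∈
      spanningForests G k ×ˢ {R ∈ (univ : Finset V).powerset | #R ≤ k} := by
    intro h hh
    obtain ⟨hN, hk⟩ := mem_filter.1 hh
    refine mem_product.2 ⟨mem_spanningForests.2 ⟨parentGraph_le fun v _ => ?_,
      (hparent h).isAcyclic_parentGraph, ?_⟩, by simpa using hk⟩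
    · simpa using Fintype.mem_piFinset.1 hN v
    · exact (hparent h).card_le_card_edgeFinset_add.trans (by gcongr)
  have hfiber : ∀ F R, #R ≤ k → #{h ∈ H | (parentGraph h (cycleRoots h), cycleRoots h) = (F, R)} ≤
      G.maxDegree ^ k := by
    intro F R hR
    refine (card_le_pow_of_eqOn_compl (N := fun v => G.neighborFinset v) (R := R)
      (fun v => G.degree_le_maxDegree v) ((filter_subset _ _).trans (filter_subset _ _))
      fun h hh g hg v hv => ?_).trans (Nat.pow_le_pow_right hmax hR)
    obtain ⟨hF, rfl⟩ := Prod.mk.injEq .. ▸ (mem_filter.1 hh).2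
    obtain ⟨hF', hR'⟩ := Prod.mk.injEq .. ▸ (mem_filter.1 hg).2
    exact (hparent h).eq_of_parentGraph_eq (hF.trans (hR' ▸ hF'.symm)) hv
  calc (#H : ℝ) ≤ #(spanningForests G k ×ˢ {R ∈ (univ : Finset V).powerset | #R ≤ k}) *
        (G.maxDegree ^ k : ℕ) :=
        cast_card_le_card_mul_of_mapsTo hmaps fun (F, R) hFR =>
          Nat.cast_le.2 (hfiber F R (mem_filter.1 (mem_product.1 hFR).2).2)
    _ ≤ #(spanningTrees G) * (Real.exp (Fintype.card V / y) * y ^ k) *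
          (Real.exp (Fintype.card V / y) * y ^ k) * (G.maxDegree ^ k : ℕ) := by
        rw [card_product, Nat.cast_mul]
        gcongr
        · exact card_spanningForests_le hG k hy
        · exact card_filter_card_le_le_exp univ k hy
    _ = _ := by push_cast; ring

end SpanningForests

section SpanningTreeCount

variable {V : Type*} [Fintype V] {G : SimpleGraph V} [DecidableRel G.Adj]

lemma minDegree_pow_card_le_two_mul (hG : G.Connected) (hmin : 0 < G.minDegree) {L : ℕ}
    (hL : 0 < L) {y : ℝ} (hy : 1 ≤ y) {k : ℕ}
    (hk : 2 * Fintype.card V * L / G.minDegree + Fintype.card V / L ≤ k) :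
    (G.minDegree : ℝ) ^ Fintype.card V ≤
      2 * (#(spanningTrees G) * (Real.exp (Fintype.card V / y) * y ^ k) ^ 2 * G.maxDegree ^ k) := by
  classical
  have := hG.nonempty
  set H := Fintype.piFinset fun v => G.neighborFinset v
  have hpow : G.minDegree ^ Fintype.card V ≤ #H := by
    rw [Fintype.card_piFinset]
    exact pow_card_le_prod _ _ _ fun v _ => G.minDegree_le_degree v
  have hhalf : #H ≤ 2 * #{h ∈ H | #(cycleRoots h) ≤ k} :=
    (card_piFinset_le_two_mul_card_filter_card_cycleRoots_le
      (fun v => G.minDegree_le_degree v) hmin hL).trans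
      (Nat.mul_le_mul_left 2 (card_le_card (monotone_filter_right _ fun _ _ h => h.trans hk)))
  calc (G.minDegree : ℝ) ^ Fintype.card V ≤ 2 * #{h ∈ H | #(cycleRoots h) ≤ k} :=
        mod_cast hpow.trans hhalf
    _ ≤ _ := by
        gcongr
        exact card_filter_card_cycleRoots_le_le hG (hmin.trans_le G.minDegree_le_maxDegree) k hy

lemma div_add_div_sqrt_mul_sqrt_le (n : ℕ) {m : ℕ} (hm : 0 < m) :
    (2 * n * m.sqrt / m + n / m.sqrt) * m.sqrt ≤ 3 * n := by
  have hsqrt : 0 < m.sqrt := Nat.sqrt_pos.2 hm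
  have hleft : 2 * n * m.sqrt / m * m.sqrt ≤ 2 * n := by
    refine Nat.le_of_mul_le_mul_right ?_ hsqrt
    calc 2 * n * m.sqrt / m * m.sqrt * m.sqrt = 2 * n * m.sqrt / m * (m.sqrt * m.sqrt) :=
          mul_assoc _ _ _
      _ ≤ 2 * n * m.sqrt / m * m := Nat.mul_le_mul_left _ m.sqrt_le
      _ ≤ 2 * n * m.sqrt := Nat.div_mul_le_self _ _
  have hright : n / m.sqrt * m.sqrt ≤ n := Nat.div_mul_le_self _ _
  rw [add_mul]
  omega

lemma ten_pow_six_mul_le_exp_sqrt {m D : ℕ} (hm : 10 ^ 40 ≤ m) (hD : D ≤ 2 * m) :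
    (10 : ℝ) ^ 6 * D ≤ Real.exp (m.sqrt / 3000) := by
  have hsqrt : (10 : ℝ) ^ 20 ≤ m.sqrt := by
    exact_mod_cast (Nat.le_sqrt.2 (by simpa [← pow_add] using hm) : 10 ^ 20 ≤ m.sqrt)
  have hDsqrt : (D : ℝ) ≤ 2 * (m.sqrt + 1) ^ 2 := by
    exact_mod_cast hD.trans (Nat.mul_le_mul_left 2 m.lt_succ_sqrt'.le)
  calc (10 : ℝ) ^ 6 * D ≤ (m.sqrt / 3000) ^ 3 / (Nat.factorial 3) := by
        norm_num [Nat.factorial]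
        nlinarith [mul_nonneg (sq_nonneg (m.sqrt : ℝ)) (sub_nonneg.2 hsqrt)]
    _ ≤ Real.exp (m.sqrt / 3000) := Real.pow_div_factorial_le_exp _ (by positivity) 3

lemma ten_pow_six_mul_pow_le_exp {m D : ℕ} (hm : 10 ^ 40 ≤ m) (hD : D ≤ 2 * m) (n : ℕ) :
    ((10 : ℝ) ^ 6 * D) ^ (2 * n * m.sqrt / m + n / m.sqrt) ≤ Real.exp (n / 1000) := by
  set k := 2 * n * m.sqrt / m + n / m.sqrt
  have hk : (k : ℝ) * m.sqrt ≤ 3 * n :=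
    mod_cast div_add_div_sqrt_mul_sqrt_le n (lt_of_lt_of_le (by positivity) hm)
  calc ((10 : ℝ) ^ 6 * D) ^ k ≤ Real.exp (m.sqrt / 3000) ^ k := by
        gcongr
        exact ten_pow_six_mul_le_exp_sqrt hm hD
    _ = Real.exp (k * m.sqrt / 3000) := by rw [← Real.exp_nat_mul, mul_div_assoc]
    _ ≤ Real.exp (n / 1000) := Real.exp_le_exp.2 (by linarith)

lemma two_mul_le_exp_div {n : ℕ} (hn : 10 ^ 40 ≤ n) : 2 * (n : ℝ) ≤ Real.exp (n / 1000) := by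
  have hn' : (10 : ℝ) ^ 40 ≤ n := mod_cast hn
  calc 2 * (n : ℝ) ≤ (n / 1000) ^ 2 / (Nat.factorial 2) := by
        norm_num [Nat.factorial]
        nlinarith
    _ ≤ Real.exp (n / 1000) := Real.pow_div_factorial_le_exp _ (by positivity) 2

/-- Splitting the cycles at length `√m` balances the two terms in the bound on the number of cycle
roots. -/
theorem minDegree_pow_card_le_exp_mul_card_spanningTrees (hG : G.Connected)
    (hmin : 10 ^ 40 ≤ G.minDegree) (hmax : G.maxDegree ≤ 2 * G.minDegree) :
    (G.minDegree : ℝ) ^ Fintype.card V ≤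
      #(spanningTrees G) * Real.exp (Fintype.card V / 250) := by
  have := hG.nonempty
  set n := Fintype.card V
  set m := G.minDegree
  set k := 2 * n * m.sqrt / m + n / m.sqrt with hk
  have hm : 0 < m := lt_of_lt_of_le (by positivity) hmin
  have hn : 10 ^ 40 ≤ n := hmin.trans G.minDegree_lt_card.le
  have htwo : (2 : ℝ) ≤ Real.exp (n / 1000) := by
    refine le_trans ?_ (two_mul_le_exp_div hn)
    have : (1 : ℝ) ≤ n := mod_cast Fintype.card_pos
    linarith
  calc (m : ℝ) ^ n ≤ 2 * (#(spanningTrees G) * (Real.exp (n / (1000 : ℝ)) * 1000 ^ k) ^ 2 *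
        G.maxDegree ^ k) :=
        minDegree_pow_card_le_two_mul hG hm (Nat.sqrt_pos.2 hm) (by norm_num) hk.ge
    _ = #(spanningTrees G) * (2 * Real.exp (n / 1000) ^ 2 * (10 ^ 6 * G.maxDegree) ^ k) := by
        rw [mul_pow (10 ^ 6 : ℝ), show (10 : ℝ) ^ 6 = 1000 ^ 2 by norm_num, ← pow_mul]
        ring
    _ ≤ #(spanningTrees G) *
          (Real.exp (n / 1000) * Real.exp (n / 1000) ^ 2 * Real.exp (n / 1000)) := by
        gcongr
        exact ten_pow_six_mul_pow_le_exp hmin hmax n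
    _ = #(spanningTrees G) * Real.exp (n / 250) := by
        rw [← Real.exp_nat_mul, ← Real.exp_add, ← Real.exp_add]
        ring_nf

end SpanningTreeCount

section Anticoncentration

variable {V W : Type*} [Fintype V] [Fintype W] {G : SimpleGraph V} {T₀ : SimpleGraph W}
  [DecidableRel G.Adj]

lemma labelledCopyCount_le_minDegree_pow_mul_exp (hcard : Fintype.card W = Fintype.card V)
    (hT₀ : T₀.Connected) (hmin : 10 ^ 40 ≤ G.minDegree)
    (hmax : (G.maxDegree : ℝ) ≤ (1 + 1 / 2000) * G.minDegree) :
    (G.labelledCopyCount T₀ : ℝ) ≤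
      G.minDegree ^ Fintype.card V * Real.exp (-(9 / 500) * Fintype.card V) := by
  have : Nonempty V := Fintype.card_pos_iff.1 (hcard ▸ @Fintype.card_pos _ _ hT₀.nonempty)
  set n := Fintype.card V
  set m := G.minDegree
  have hn : 10 ^ 40 ≤ n := hmin.trans G.minDegree_lt_card.le
  have hsucc : ((G.maxDegree + 1 : ℕ) : ℝ) ≤ m * Real.exp (1 / 1000) := by
    have hm : (10 : ℝ) ^ 40 ≤ m := mod_cast hmin
    have hexp := Real.add_one_le_exp (1 / 1000)
    push_cast
    nlinarith
  calc (G.labelledCopyCount T₀ : ℝ)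
      ≤ 2 * n * ((G.maxDegree + 1 : ℕ) : ℝ) ^ n * Real.exp (-n / 50) :=
        labelledCopyCount_le_exp hcard hT₀ (Nat.lt_succ_self _)
    _ ≤ Real.exp (n / 1000) * (m * Real.exp (1 / 1000)) ^ n * Real.exp (-n / 50) := by
        gcongr
        exact two_mul_le_exp_div hn
    _ = m ^ n * Real.exp (-(9 / 500) * n) := by
        rw [mul_pow, ← Real.exp_nat_mul, mul_left_comm, mul_assoc, ← Real.exp_add,
          ← Real.exp_add]
        ring_nf

theorem labelledCopyCount_div_card_isTree_le_exp
    (hcard : Fintype.card W = Fintype.card V) (hG : G.Connected) (hT₀ : T₀.Connected)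
    (hmin : 10 ^ 40 ≤ G.minDegree) (hmax : (G.maxDegree : ℝ) ≤ (1 + 1 / 2000) * G.minDegree) :
    (G.labelledCopyCount T₀ : ℝ) / Nat.card {H : SimpleGraph V // H ≤ G ∧ H.IsTree} ≤
      Real.exp (-Fintype.card V / 100) := by
  set n := Fintype.card V
  have hmax' : G.maxDegree ≤ 2 * G.minDegree := by
    have : (0 : ℝ) ≤ G.minDegree := Nat.cast_nonneg _
    exact_mod_cast (by linarith : (G.maxDegree : ℝ) ≤ 2 * G.minDegree)
  rw [card_isTree_eq_card_spanningTrees]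
  refine div_le_of_le_mul₀ (Nat.cast_nonneg _) (Real.exp_pos _).le ?_
  calc (G.labelledCopyCount T₀ : ℝ)
      ≤ G.minDegree ^ n * Real.exp (-(9 / 500) * n) :=
        labelledCopyCount_le_minDegree_pow_mul_exp hcard hT₀ hmin hmax
    _ ≤ #(spanningTrees G) * Real.exp (n / 250) * Real.exp (-(9 / 500) * n) := by
        gcongr
        exact minDegree_pow_card_le_exp_mul_card_spanningTrees hG hmin hmax'
    _ = #(spanningTrees G) * Real.exp (n / 250 + -(9 / 500) * n) := by
        rw [mul_assoc, ← Real.exp_add]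
    _ ≤ #(spanningTrees G) * Real.exp (-n / 100) := by
        gcongr
        have : (0 : ℝ) ≤ n := Nat.cast_nonneg _
        linarith
    _ = Real.exp (-n / 100) * #(spanningTrees G) := mul_comm _ _

theorem random_spanning_tree_anticoncentration_general {d : ℝ} (hd : 10 ^ 41 ≤ d)
    (hcard : Fintype.card W = Fintype.card V) (hG : G.Connected)
    (hdeg : ∀ v, (1 - 1 / 5000) * d ≤ (G.degree v : ℝ) ∧ (G.degree v : ℝ) ≤ (1 + 1 / 5000) * d)
    (hT₀ : T₀.IsTree) :
    (Nat.card {H : SimpleGraph V // H ≤ G ∧ H.IsTree ∧ Nonempty (H ≃g T₀)} : ℝ) /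
        Nat.card {H : SimpleGraph V // H ≤ G ∧ H.IsTree} ≤
      Real.exp (-Fintype.card V / 100) := by
  have := hG.nonempty
  obtain ⟨v, hv⟩ := G.exists_minimal_degree_vertex
  obtain ⟨w, hw⟩ := G.exists_maximal_degree_vertex
  have hlow := hv ▸ (hdeg v).1
  have hhigh := hw ▸ (hdeg w).2
  have hmin : 10 ^ 40 ≤ G.minDegree := by
    exact_mod_cast (by linarith : (10 : ℝ) ^ 40 ≤ G.minDegree)
  have hmax : (G.maxDegree : ℝ) ≤ (1 + 1 / 2000) * G.minDegree := by linarith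
  calc _ ≤ (G.labelledCopyCount T₀ : ℝ) / Nat.card {H : SimpleGraph V // H ≤ G ∧ H.IsTree} := by
        gcongr
        exact card_isTree_iso_le_labelledCopyCount
    _ ≤ Real.exp (-Fintype.card V / 100) :=
        labelledCopyCount_div_card_isTree_le_exp hcard hG hT₀.connected hmin hmax

end Anticoncentration

/-- Theorem 1.6 (anticoncentration): for a uniformly random spanning tree `T`
of a connected `n`-vertex almost `d`-regular graph `G`, the probability that
`T` is isomorphic to any fixed `n`-vertex tree `T₀` is at most `e^{-n/2000}`. -/
theorem random_spanning_tree_anticoncentration :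
    ∃ d₀ : ℝ, 0 < d₀ ∧ ∀ d : ℕ, d₀ ≤ d →
      ∀ (V W : Type) [Fintype V] [Fintype W] [DecidableEq V] [DecidableEq W]
        (n : ℕ) (_ : Fintype.card V = n) (_ : Fintype.card W = n)
        (G : SimpleGraph V) [DecidableRel G.Adj] (_ : G.Connected)
        (_ : ∀ v, (1 - (10:ℝ) ^ (-10 : ℤ)) * d ≤ (G.degree v : ℝ) ∧
              (G.degree v : ℝ) ≤ (1 + (10:ℝ) ^ (-10 : ℤ)) * d)
        (T₀ : SimpleGraph W) [DecidableRel T₀.Adj] (_ : T₀.IsTree),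
        (Nat.card {H : SimpleGraph V // H ≤ G ∧ H.IsTree ∧ Nonempty (H ≃g T₀)} : ℝ)
            / (Nat.card {H : SimpleGraph V // H ≤ G ∧ H.IsTree} : ℝ)
          ≤ Real.exp (-(n : ℝ) / 2000) := by
  refine ⟨10 ^ 41, by positivity, fun d hd V W _ _ _ _ n hV hW G _ hG hdeg T₀ _ hT₀ => ?_⟩
  refine (random_spanning_tree_anticoncentration_general hd (hW.trans hV.symm) hG (fun v => ?_)
    hT₀).trans (Real.exp_le_exp.2 ?_)
  · have hε : (10 : ℝ) ^ (-10 : ℤ) ≤ 1 / 5000 := by norm_num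
    exact ⟨le_trans (by gcongr) (hdeg v).1, (hdeg v).2.trans (by gcongr)⟩
  · rw [hV]
    linarith [(Nat.cast_nonneg n : (0 : ℝ) ≤ n)]
end
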